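/- arXiv:math/0611793 — 7 statements merged into one kernel-verified Lean document; each statement's English description precedes it below -/
import Mathlib

section
/- Let μ ∈ Lⁿ be such that Z²(μ,μ) = B²(μ,μ) (i.e. H²(μ,μ) = 0). Then the orbit O(μ) is open in Lⁿ for the topology induced by the Euclidean topology of the space of alternating bilinear maps; in particular μ is rigid. -/
set_option synthInstance.maxHeartbeats 400000
set_option maxHeartbeats 1000000

noncomputable section

abbrev E (n : ℕ) : Type := Fin n → ℂ

abbrev Bil (n : ℕ) : Type := E n →L[ℂ] E n →L[ℂ] E n

/-- A bilinear map is alternating. -/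
def IsAlt {n : ℕ} (μ : Bil n) : Prop := ∀ X, μ X X = 0

/-- The Jacobi identity. -/
def Jacobi {n : ℕ} (μ : Bil n) : Prop :=
  ∀ X Y Z, μ X (μ Y Z) + μ Y (μ Z X) + μ Z (μ X Y) = 0

/-- `Lⁿ`, the set of Lie algebra laws on `ℂⁿ`. -/
def LieLaw (n : ℕ) : Set (Bil n) := {μ | IsAlt μ ∧ Jacobi μ}

/-- The orbit of a law under the action `(f*μ)(X,Y) = f⁻¹(μ(f X, f Y))` of `GL(n,ℂ)`. -/
def orbit {n : ℕ} (μ : Bil n) : Set (Bil n) :=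
  {ν | ∃ f : E n ≃L[ℂ] E n, ∀ X Y, ν X Y = f.symm (μ (f X) (f Y))}

/-- The Gerstenhaber trilinear product `(φ∘ψ)(X,Y,Z)`. -/
def circ {n : ℕ} (φ ψ : Bil n) (X Y Z : E n) : E n :=
  φ (ψ X Y) Z + φ (ψ Y Z) X + φ (ψ Z X) Y

/-- `Z²(μ,μ)`: alternating 2-cochains with `δ_μφ = μ∘φ + φ∘μ = 0`. -/
def Z2 {n : ℕ} (μ : Bil n) : Set (Bil n) :=
  {φ | IsAlt φ ∧ ∀ X Y Z, circ μ φ X Y Z + circ φ μ X Y Z = 0}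

/-- The coboundary `δ_μ g`, for `g` an endomorphism:
`(δ_μ g)(X,Y) = −g(μ(X,Y)) + μ(g X, Y) + μ(X, g Y)`. -/
def delta1 {n : ℕ} (μ : Bil n) (g : E n →L[ℂ] E n) : Bil n :=
  μ.comp g + (μ.flip.comp g).flip -
    (ContinuousLinearMap.compL ℂ (E n) (E n) (E n) g).comp μ

lemma delta1_apply {n : ℕ} (μ : Bil n) (g : E n →L[ℂ] E n) (X Y : E n) :
    delta1 μ g X Y = -g (μ X Y) + μ (g X) Y + μ X (g Y) := by
  simp [delta1]; ring

/-- `B²(μ,μ)`, the set of coboundaries. -/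
def B2 {n : ℕ} (μ : Bil n) : Set (Bil n) := Set.range (delta1 μ)

/-- `f*μ`, defined using `Ring.inverse` so that it is defined for any `f`
(it agrees with the natural action when `f` is invertible). -/
def conj {n : ℕ} (f : E n →L[ℂ] E n) (μ : Bil n) : Bil n :=
  (((((ContinuousLinearMap.compL ℂ (E n) (E n) (E n) (Ring.inverse f)).comp μ).flip).comp
    f).flip).comp f

lemma conj_apply {n : ℕ} (f : E n →L[ℂ] E n) (μ : Bil n) (X Y : E n) :
    conj f μ X Y = Ring.inverse f (μ (f X) (f Y)) := rfl

/-!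
The proof takes a linear slice transverse to the orbit. Let `P` be a projection of the space of
bilinear maps onto a complement `C` of `B²(μ,μ)`. The map `(f, φ) ↦ f*(μ + P φ)` has derivative
`(g, φ) ↦ δ_μ g + P φ` at `(1, 0)` (`hasStrictFDerivAt_pull`), which is surjective, so every bilinear
map `ν` near `μ` has the form `f*(μ + c)` with `f` invertible and `c = P φ ∈ C` small. If `ν` is a Lie
algebra law, then so is `μ + c`; that is, `c` is alternating and satisfies the Maurer–Cartan equation
`δ_μ c + c∘c = 0` (`maurerCartan`). Since `Z²(μ,μ) = B²(μ,μ)` meets `C` only in `0`, the linear part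
`δ_μ` is injective on the alternating elements of `C`, and the quadratic term cannot compensate it
for small `c ≠ 0` (`eventually_eq_zero`). Hence `c = 0` and `ν = f*μ`. Openness at the other points
of the orbit follows by transport along the action (`isOpen_orbit`).

The argument is carried out over a field `𝕜` that is `ℝ` or `ℂ` and an arbitrary finite-dimensional
normed space `V`, with counterparts of the definitions above, and is specialised to `V = ℂⁿ` at the
end.
-/

set_option maxSynthPendingDepth 3

open Filter Topology

/-! ### Laws on an abstract finite-dimensional space -/

section Abstract

variable {𝕜 : Type*} [RCLike 𝕜] {V : Type*} [NormedAddCommGroup V] [NormedSpace 𝕜 V]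

/-- Bilinear maps `V × V → V`, in curried form, with the operator norm. -/
abbrev BilMap (𝕜 : Type*) [RCLike 𝕜] (V : Type*) [NormedAddCommGroup V] [NormedSpace 𝕜 V] :
    Type _ := V →L[𝕜] V →L[𝕜] V

/-- `φ` is alternating. -/
def AltMap (φ : BilMap 𝕜 V) : Prop := ∀ X, φ X X = 0

/-- `φ` is a Lie algebra law on `V`. -/
def LawOn (φ : BilMap 𝕜 V) : Prop :=
  AltMap φ ∧ ∀ X Y Z, φ X (φ Y Z) + φ Y (φ Z X) + φ Z (φ X Y) = 0

/-- The product `(φ∘ψ)(X,Y,Z)`. -/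
def circOn (φ ψ : BilMap 𝕜 V) (X Y Z : V) : V :=
  φ (ψ X Y) Z + φ (ψ Y Z) X + φ (ψ Z X) Y

/-- The coboundary map `g ↦ δ_μ g`, as a linear map on endomorphisms. -/
def cobd (μ : BilMap 𝕜 V) : (V →L[𝕜] V) →ₗ[𝕜] BilMap 𝕜 V where
  toFun g := μ.comp g + (μ.flip.comp g).flip - (ContinuousLinearMap.compL 𝕜 V V V g).comp μ
  map_add' a b := by ext X Y; simp; abel
  map_smul' a b := by ext X Y; simp [smul_add, smul_sub]

theorem cobd_apply (μ : BilMap 𝕜 V) (g : V →L[𝕜] V) (X Y : V) :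
    cobd μ g X Y = -g (μ X Y) + μ (g X) Y + μ X (g Y) := by
  simp [cobd]; abel

/-- `f*μ`, with `Ring.inverse f` in place of `f⁻¹`, hence `0` when `f` is not invertible. -/
def pull (f : V →L[𝕜] V) (μ : BilMap 𝕜 V) : BilMap 𝕜 V :=
  (((((ContinuousLinearMap.compL 𝕜 V V V (Ring.inverse f)).comp μ).flip).comp f).flip).comp f

theorem pull_apply (f : V →L[𝕜] V) (μ : BilMap 𝕜 V) (X Y : V) :
    pull f μ X Y = Ring.inverse f (μ (f X) (f Y)) := rfl

theorem AltMap.neg_swap {φ : BilMap 𝕜 V} (h : AltMap φ) (X Y : V) : φ X Y = -φ Y X := by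
  have := h (X + Y)
  simp only [map_add, add_apply, h X, h Y, zero_add, add_zero] at this
  exact eq_neg_of_add_eq_zero_right this

/-- Transport of structure: `e*ν` is a Lie algebra law when `ν` is. -/
theorem LawOn.of_conj {ν ν' : BilMap 𝕜 V} (hν : LawOn ν) (e : V ≃L[𝕜] V)
    (he : ∀ X Y, ν' X Y = e.symm (ν (e X) (e Y))) : LawOn ν' := by
  refine ⟨fun X => by rw [he, hν.1, map_zero], fun X Y Z => ?_⟩
  simp only [he, e.apply_symm_apply, ← map_add]
  rw [hν.2, map_zero]

/-- The Jacobi identity in the form `φ∘φ = 0`. -/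
theorem LawOn.circOn_self {φ : BilMap 𝕜 V} (h : LawOn φ) (X Y Z : V) : circOn φ φ X Y Z = 0 := by
  have := h.2 X Y Z
  rw [circOn, h.1.neg_swap (φ X Y) Z, h.1.neg_swap (φ Y Z) X, h.1.neg_swap (φ Z X) Y,
    ← neg_eq_zero, ← this]
  abel

/-- The Maurer–Cartan equation `δ_μ c + c∘c = 0` of a deformation `μ + c`. -/
theorem maurerCartan {μ c : BilMap 𝕜 V} (hμ : LawOn μ) (hc : LawOn (μ + c)) :
    AltMap c ∧ ∀ X Y Z, circOn μ c X Y Z + circOn c μ X Y Z + circOn c c X Y Z = 0 := by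
  have ha : AltMap c := fun X => by
    have := hc.1 X
    simpa [hμ.1 X] using this
  refine ⟨ha, fun X Y Z => ?_⟩
  have h1 := hc.circOn_self X Y Z
  have h2 := hμ.circOn_self X Y Z
  calc circOn μ c X Y Z + circOn c μ X Y Z + circOn c c X Y Z
      = circOn (μ + c) (μ + c) X Y Z - circOn μ μ X Y Z := by
        simp only [circOn, add_apply, map_add]
        abel
    _ = 0 := by rw [h1, h2, sub_zero]

/-! ### Submersivity of the action on a transversal -/

variable [FiniteDimensional 𝕜 V]

/-- The derivative at `(1, 0)` of `(f, φ) ↦ f*(μ + P φ)` is `(g, φ) ↦ δ_μ g + P φ`. -/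
theorem hasStrictFDerivAt_pull (μ : BilMap 𝕜 V) (P : BilMap 𝕜 V →L[𝕜] BilMap 𝕜 V) :
    ∃ F' : ((V →L[𝕜] V) × BilMap 𝕜 V) →L[𝕜] BilMap 𝕜 V,
      HasStrictFDerivAt (fun p : (V →L[𝕜] V) × BilMap 𝕜 V => pull p.1 (μ + P p.2)) F' (1, 0) ∧
      ∀ g φ, F' (g, φ) = cobd μ g + P φ := by
  have : CompleteSpace V := FiniteDimensional.complete 𝕜 V
  have h := hasStrictFDerivAt_ringInverse (𝕜 := 𝕜) (1 : (V →L[𝕜] V)ˣ)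
  have h1 : HasStrictFDerivAt (fun p : (V →L[𝕜] V) × BilMap 𝕜 V => p.1)
      (ContinuousLinearMap.fst 𝕜 (V →L[𝕜] V) (BilMap 𝕜 V)) (1, 0) := hasStrictFDerivAt_fst
  have h2 : HasStrictFDerivAt (fun p : (V →L[𝕜] V) × BilMap 𝕜 V => μ + P p.2)
      (P.comp (ContinuousLinearMap.snd 𝕜 (V →L[𝕜] V) (BilMap 𝕜 V))) (1, 0) :=
    (P.comp (ContinuousLinearMap.snd 𝕜 (V →L[𝕜] V) (BilMap 𝕜 V))).hasStrictFDerivAt.const_add μ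
  have h3 : HasStrictFDerivAt (fun p : (V →L[𝕜] V) × BilMap 𝕜 V => Ring.inverse p.1) _ (1, 0) :=
    HasStrictFDerivAt.comp ((1 : V →L[𝕜] V), (0 : BilMap 𝕜 V)) h h1
  have h4 := ((ContinuousLinearMap.compL 𝕜 V V V).hasStrictFDerivAt.comp _ h3).clm_comp h2
  have h5 := ((ContinuousLinearMap.flipₗᵢ 𝕜 V V
    V).toContinuousLinearEquiv.hasStrictFDerivAt.comp _ h4).clm_comp h1
  have h6 := ((ContinuousLinearMap.flipₗᵢ 𝕜 V V
    V).toContinuousLinearEquiv.hasStrictFDerivAt.comp _ h5).clm_comp h1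
  refine ⟨_, h6, fun g φ => ?_⟩
  ext X Y
  simp [cobd_apply]
  abel

/-- A projection `P` onto a complement of `B²(μ,μ)` in the space of all bilinear maps, described by
its kernel. -/
theorem exists_proj (μ : BilMap 𝕜 V) :
    ∃ P : BilMap 𝕜 V →L[𝕜] BilMap 𝕜 V, (∀ φ, φ - P φ ∈ LinearMap.range (cobd μ)) ∧
      ∀ φ ∈ LinearMap.range (cobd μ), P φ = 0 := by
  obtain ⟨C, hC⟩ := Submodule.exists_isCompl (LinearMap.range (cobd μ))
  refine ⟨LinearMap.toContinuousLinearMap (C.projection _ hC.symm), fun φ => ?_, fun φ hφ => ?_⟩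
  · exact Submodule.sub_projection_mem hC.symm φ
  · exact (Submodule.projection_apply_eq_zero_iff hC.symm).2 hφ

/-! ### Isolation of the zero solution of the Maurer–Cartan equation -/

/-- If `P` kills the 2-cocycles, then `0` is isolated among the solutions of the Maurer–Cartan
equation fixed by `P`. Writing a solution as `c = t u` with `‖u‖ = 1` gives `δ_μ u + t (u∘u) = 0`,
while `δ_μ` has no zero on the compact set of unit alternating `u` fixed by `P`; this rules out
small `t`. -/
theorem eventually_eq_zero {μ : BilMap 𝕜 V} (P : BilMap 𝕜 V →L[𝕜] BilMap 𝕜 V)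
    (hP : ∀ φ, AltMap φ → (∀ X Y Z, circOn μ φ X Y Z + circOn φ μ X Y Z = 0) → P φ = 0) :
    ∀ᶠ c in 𝓝 (0 : BilMap 𝕜 V), P c = c → AltMap c →
      (∀ X Y Z, circOn μ c X Y Z + circOn c μ X Y Z + circOn c c X Y Z = 0) → c = 0 := by
  have hprop : ProperSpace (BilMap 𝕜 V) := FiniteDimensional.proper 𝕜 (BilMap 𝕜 V)
  let K : Set (BilMap 𝕜 V) := Metric.sphere 0 1 ∩ ({u | P u = u} ∩ {u | AltMap u})
  have hK : IsCompact K := by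
    refine (isCompact_sphere (0 : BilMap 𝕜 V) 1).inter_right (IsClosed.inter ?_ ?_)
    · exact isClosed_eq P.continuous continuous_id
    · simp only [AltMap, Set.ofPred_forall]
      exact isClosed_iInter fun X => isClosed_eq (by fun_prop) continuous_const
  have key : ∀ᶠ t in 𝓝 (0 : 𝕜), ∀ u ∈ K,
      ¬ ∀ X Y Z, circOn μ u X Y Z + circOn u μ X Y Z + t • circOn u u X Y Z = 0 := by
    refine hK.eventually_forall_of_forall_eventually
      (P := fun t u => ¬ ∀ X Y Z, circOn μ u X Y Z + circOn u μ X Y Z + t • circOn u u X Y Z = 0)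
      fun u hu => ?_
    have hex : ∃ X Y Z, circOn μ u X Y Z + circOn u μ X Y Z ≠ 0 := by
      by_contra! hh
      have h0 : u = 0 := hu.2.1.symm.trans (hP u hu.2.2 hh)
      have h1 : ‖u‖ = 1 := by simpa using hu.1
      simp [h0] at h1
    obtain ⟨X, Y, Z, hXYZ⟩ := hex
    have hcont : Continuous fun z : 𝕜 × BilMap 𝕜 V =>
        circOn μ z.2 X Y Z + circOn z.2 μ X Y Z + z.1 • circOn z.2 z.2 X Y Z := by
      unfold circOn
      fun_prop
    have hne : ∀ᶠ z in 𝓝 ((0 : 𝕜), u),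
        circOn μ z.2 X Y Z + circOn z.2 μ X Y Z + z.1 • circOn z.2 z.2 X Y Z ≠ 0 :=
      hcont.continuousAt.eventually_ne (by simpa using hXYZ)
    filter_upwards [hne] with z hz hall using hz (hall X Y Z)
  have hnorm : Tendsto (fun c : BilMap 𝕜 V => ((‖c‖ : ℝ) : 𝕜)) (𝓝 0) (𝓝 0) := by
    have : Continuous (fun c : BilMap 𝕜 V => ((‖c‖ : ℝ) : 𝕜)) :=
      RCLike.continuous_ofReal.comp continuous_norm
    simpa using this.tendsto 0
  filter_upwards [hnorm.eventually key] with c hc hPc halt hmc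
  by_contra hne
  have hn : ((‖c‖ : ℝ) : 𝕜) ≠ 0 := by simpa using hne
  refine hc (((‖c‖ : ℝ) : 𝕜)⁻¹ • c) ⟨?_, ?_, ?_⟩ fun X Y Z => ?_
  · simp [norm_smul, hne]
  · simp [hPc]
  · intro X
    simp [halt X]
  · have h := congrArg (fun v => ((‖c‖ : ℝ) : 𝕜)⁻¹ • v) (hmc X Y Z)
    simp only [smul_zero] at h
    rw [← h]
    simp only [circOn, smul_apply, map_smul, smul_add, smul_smul, mul_inv_cancel_left₀ hn]

/-! ### The orbit is a neighbourhood of each of its points -/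

/-- When `Z²(μ,μ) ⊆ B²(μ,μ)`, every law close to `μ` is isomorphic to `μ`: it is `f*(μ + P φ)` with
`f` near `1` and `φ` near `0` by submersivity, and then `P φ = 0` by the Maurer–Cartan equation. -/
theorem eventually_mem_orbit {μ : BilMap 𝕜 V} (hμ : LawOn μ)
    (h : ∀ φ, AltMap φ → (∀ X Y Z, circOn μ φ X Y Z + circOn φ μ X Y Z = 0) →
      ∃ g, cobd μ g = φ) :
    ∀ᶠ ν in 𝓝 μ, LawOn ν → ∃ f : V ≃L[𝕜] V, ∀ X Y, ν X Y = f.symm (μ (f X) (f Y)) := by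
  have : CompleteSpace V := FiniteDimensional.complete 𝕜 V
  obtain ⟨P, hP1, hP2⟩ := exists_proj μ
  have hPP : ∀ φ, P (P φ) = P φ := fun φ => by
    have := hP2 _ (hP1 φ)
    rw [map_sub, sub_eq_zero] at this
    exact this.symm
  obtain ⟨F', hF, hF'⟩ := hasStrictFDerivAt_pull μ P
  have hsurj : F'.range = ⊤ := by
    rw [LinearMap.range_eq_top]
    intro φ
    obtain ⟨g, hg⟩ := hP1 φ
    exact ⟨(g, φ), by simp [hF', hg]⟩
  have : CompleteSpace ((V →L[𝕜] V) × BilMap 𝕜 V) := FiniteDimensional.complete 𝕜 _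
  have hmap := hF.map_nhds_eq_of_surj hsurj
  have h10 : pull (1 : V →L[𝕜] V) (μ + P 0) = μ := by
    ext X Y
    simp [pull_apply]
  simp only [h10] at hmap
  rw [← hmap, eventually_map]
  have hunit : ∀ᶠ p in 𝓝 ((1 : V →L[𝕜] V), (0 : BilMap 𝕜 V)), IsUnit p.1 :=
    continuous_fst.continuousAt.eventually (Units.isOpen.mem_nhds isUnit_one)
  have hzero : ∀ᶠ p in 𝓝 ((1 : V →L[𝕜] V), (0 : BilMap 𝕜 V)), P (P p.2) = P p.2 →
      AltMap (P p.2) → (∀ X Y Z, circOn μ (P p.2) X Y Z + circOn (P p.2) μ X Y Z +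
        circOn (P p.2) (P p.2) X Y Z = 0) → P p.2 = 0 := by
    have ht : Tendsto (fun p : (V →L[𝕜] V) × BilMap 𝕜 V => P p.2) (𝓝 (1, 0)) (𝓝 0) := by
      have : Continuous (fun p : (V →L[𝕜] V) × BilMap 𝕜 V => P p.2) := by fun_prop
      simpa using this.tendsto (1, 0)
    exact ht.eventually (eventually_eq_zero P fun φ ha hφ => hP2 φ (h φ ha hφ))
  filter_upwards [hunit, hzero] with p hp hz hlie
  obtain ⟨u, hu⟩ := hp
  let e : V ≃L[𝕜] V := ContinuousLinearEquiv.unitsEquiv 𝕜 V u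
  have hpull : ∀ ψ X Y, pull p.1 ψ X Y = e.symm (ψ (e X) (e Y)) := by
    intro ψ X Y
    rw [pull_apply, ← hu, Ring.inverse_unit]
    rfl
  have hlie' : LawOn (μ + P p.2) := by
    refine hlie.of_conj e.symm fun X Y => ?_
    rw [hpull]
    simp
  obtain ⟨ha, hmc⟩ := maurerCartan hμ hlie'
  refine ⟨e, fun X Y => ?_⟩
  rw [hpull, hz (hPP _) ha hmc, add_zero]

/-- Openness at a point `ν₀ = e*μ` of the orbit follows from openness at `μ` through the
homeomorphism `ν ↦ (e⁻¹)*ν`. -/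
theorem isOpen_orbit (μ : BilMap 𝕜 V) (hμ : LawOn μ)
    (h : ∀ φ, AltMap φ → (∀ X Y Z, circOn μ φ X Y Z + circOn φ μ X Y Z = 0) →
      ∃ g, cobd μ g = φ) :
    IsOpen {ν : {ν : BilMap 𝕜 V | LawOn ν} |
      ∃ f : V ≃L[𝕜] V, ∀ X Y, (ν : BilMap 𝕜 V) X Y = f.symm (μ (f X) (f Y))} := by
  rw [isOpen_iff_eventually]
  rintro ⟨ν₀, hν₀⟩ ⟨e, he⟩
  let i : V →L[𝕜] V := (e.symm : V →L[𝕜] V)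
  let T : BilMap 𝕜 V → BilMap 𝕜 V := fun ν =>
    ((((ContinuousLinearMap.compL 𝕜 V V V (e : V →L[𝕜] V)).comp ν).flip.comp i).flip).comp i
  have hT : ∀ ν X Y, T ν X Y = e (ν (e.symm X) (e.symm Y)) := fun ν X Y => rfl
  have hTc : Continuous T := by
    have hf : Continuous fun ψ : BilMap 𝕜 V => ψ.flip :=
      (ContinuousLinearMap.flipₗᵢ 𝕜 V V V).continuous
    exact (hf.comp ((hf.comp (continuous_const.clm_comp continuous_id)).clm_comp
      continuous_const)).clm_comp continuous_const
  have hT0 : T ν₀ = μ := by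
    ext X Y
    rw [hT]
    have := he (e.symm X) (e.symm Y)
    simp only [e.apply_symm_apply] at this
    simp [this]
  have ht : Tendsto (fun ν : {ν : BilMap 𝕜 V | LawOn ν} => T ν) (𝓝 ⟨ν₀, hν₀⟩) (𝓝 μ) := by
    rw [← hT0]
    exact (hTc.comp continuous_subtype_val).tendsto _
  filter_upwards [ht.eventually (eventually_mem_orbit hμ h)] with ν hν
  obtain ⟨f, hf⟩ := hν (LawOn.of_conj ν.2 e.symm (hT ν))
  refine ⟨e.trans f, fun X Y => ?_⟩
  have := hf (e X) (e Y)
  rw [hT] at this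
  simp only [e.symm_apply_apply] at this
  rw [← e.symm_apply_apply ((ν : BilMap 𝕜 V) X Y), this]
  rfl

end Abstract

/-- if `Z²(μ,μ) = B²(μ,μ)` (i.e. `H²(μ,μ) = 0`), the orbit `O(μ)` is open
in `Lⁿ` for the induced Euclidean topology; in particular `μ` is rigid. -/
theorem stmt6 (n : ℕ) (μ : Bil n) (hμ : μ ∈ LieLaw n) (h : Z2 μ = B2 μ) :
    IsOpen {ν : LieLaw n | (ν : Bil n) ∈ orbit μ} := by
  -- The abstract notions unfold to the concrete ones when `V = ℂⁿ`.
  refine isOpen_orbit (V := E n) μ hμ fun φ ha hφ => ?_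
  have hφ' : φ ∈ B2 μ := h ▸ (show φ ∈ Z2 μ from ⟨ha, hφ⟩)
  obtain ⟨g, hg⟩ := hφ'
  exact ⟨g, hg⟩
end
end

section
/- Let p ≥ 1 and let μ ∈ L^{2p+1} be a Lie algebra law on ℂ^{2p+1}. If (ℂ^{2p+1}, μ) admits a contact form, then the Heisenberg law h_p lies in the closure of the orbit O(μ) (i.e. h_p is a contraction of μ); conversely, if h_p lies in the closure of O(μ), then (ℂ^{2p+1}, μ) admits a contact form. -/
/-!
A law with a contact form contracts to the Heisenberg law, and conversely.

Suppose `ω` is a contact form. Then `dω` is nondegenerate on `ker ω`: if `X ∈ ker ω` were nonzero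
and `dω(X, ·)` vanished on `ker ω`, contraction with `X` would send `dω` to a multiple of `ω`, hence
kill the top-degree element `ω ∧ (dω)^p`, and a top-degree element killed by such a contraction is
zero (`pow_mul_ι_eq_zero`, `IsContact.nondegenerate`). Symplectic Gram–Schmidt on `ker ω`
(`exists_symplectic_family`), completed by a vector on which `ω` is `1`, gives a frame in which `ω`
is the last coordinate and `ω ∘ μ` has the Heisenberg coefficients on `ker ω`
(`IsContact.exists_frame`). Scaling `ker ω` by `t` and the last vector by `t²` multiplies the
structure constant with indices `i, j, k` by `t` to the power `w i + w j - w k`, where `w` is `1` on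
`ker ω` and `2` on the last index. This exponent vanishes exactly for the Heisenberg coefficients
and is positive otherwise, so the limit at `t = 0` is `h_p` (`IsContact.mem_closure`).

Conversely, the last coordinate is a contact form for `h_p` (`isContact_heis`). For a fixed linear
form the contact condition is open in the law (`isOpen_isContact`), so it holds for some law in the
orbit of `μ`, and the contact form is transported back to `μ` by functoriality of the exterior
algebra (`map_twoFormEl`, `IsContact.of_orbit`).
-/

set_option synthInstance.maxHeartbeats 400000
set_option maxHeartbeats 1000000

noncomputable section

open scoped BigOperators

/-- The degree-2 element of the exterior algebra of the dual space associated with a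
2-form `β`, expressed in the standard dual basis: `Σ_{i<j} β(e_i,e_j) e^i ∧ e^j`. -/
noncomputable def twoFormEl (n : ℕ) (β : E n → E n → ℂ) :
    ExteriorAlgebra ℂ (Module.Dual ℂ (E n)) :=
  ∑ q ∈ Finset.univ.filter (fun q : Fin n × Fin n => q.1 < q.2),
    β (Pi.single q.1 1) (Pi.single q.2 1) •
      (ExteriorAlgebra.ι ℂ (LinearMap.proj q.1 : Module.Dual ℂ (E n)) *
        ExteriorAlgebra.ι ℂ (LinearMap.proj q.2 : Module.Dual ℂ (E n)))

/-- `ω` is a contact form on `(ℂ^{2p+1}, μ)`: `ω ∧ (dω)^p ≠ 0`, where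
`dω(X,Y) = −ω(μ(X,Y))`. -/
def IsContact {n : ℕ} (μ : Bil n) (ω : Module.Dual ℂ (E n)) (p : ℕ) : Prop :=
  ExteriorAlgebra.ι ℂ ω * (twoFormEl n fun X Y => -ω (μ X Y)) ^ p ≠ 0

/-- The structure constants of the `(2p+1)`-dimensional Heisenberg law `h_p`:
`h_p(e_{2i+1}, e_{2i+2}) = e_{2p+1}` for `i = 0,…,p−1` (0-indexed: pairs `(2i, 2i+1)`
with value `e_{2p}`), all other brackets of basis vectors being zero. -/
noncomputable def heisC (p : ℕ) (i j : Fin (2 * p + 1)) : E (2 * p + 1) :=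
  if (i : ℕ) % 2 = 0 ∧ (j : ℕ) = (i : ℕ) + 1 then Pi.single (Fin.last (2 * p)) 1
  else if (j : ℕ) % 2 = 0 ∧ (i : ℕ) = (j : ℕ) + 1 then -Pi.single (Fin.last (2 * p)) 1
  else 0

/-! ### Contraction and degree-two elements of the exterior algebra -/

section Exterior

variable {M : Type*} [AddCommGroup M] [Module ℂ M]

/-- Interior product of an element of the exterior algebra of `M` with a linear form on `M`
(the exterior algebra being the Clifford algebra of the zero quadratic form). -/
def contr (d : Module.Dual ℂ M) : ExteriorAlgebra ℂ M →ₗ[ℂ] ExteriorAlgebra ℂ M :=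
  CliffordAlgebra.contractLeft (Q := (0 : QuadraticForm ℂ M)) d

lemma contr_ι_mul (d : Module.Dual ℂ M) (a : M) (x : ExteriorAlgebra ℂ M) :
    contr d (ExteriorAlgebra.ι ℂ a * x) = d a • x - ExteriorAlgebra.ι ℂ a * contr d x :=
  CliffordAlgebra.contractLeft_ι_mul (Q := (0 : QuadraticForm ℂ M)) d a x

lemma contr_ι (d : Module.Dual ℂ M) (a : M) :
    contr d (ExteriorAlgebra.ι ℂ a) = algebraMap ℂ _ (d a) :=
  CliffordAlgebra.contractLeft_ι (Q := (0 : QuadraticForm ℂ M)) d a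

lemma contr_ι_mul_ι (d : Module.Dual ℂ M) (a b : M) :
    contr d (ExteriorAlgebra.ι ℂ a * ExteriorAlgebra.ι ℂ b) =
      d a • ExteriorAlgebra.ι ℂ b - d b • ExteriorAlgebra.ι ℂ a := by
  rw [contr_ι_mul, contr_ι, ← Algebra.commutes, ← Algebra.smul_def]

lemma ι_mul_swap (a b : M) : ExteriorAlgebra.ι ℂ a * ExteriorAlgebra.ι ℂ b =
    -(ExteriorAlgebra.ι ℂ b * ExteriorAlgebra.ι ℂ a) :=
  eq_neg_of_add_eq_zero_left (ExteriorAlgebra.ι_add_mul_swap a b)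

lemma deg_two_induction {P : ExteriorAlgebra ℂ M → Prop}
    (hι : ∀ a b, P (ExteriorAlgebra.ι ℂ a * ExteriorAlgebra.ι ℂ b))
    (hadd : ∀ x y, P x → P y → P (x + y)) {Ω : ExteriorAlgebra ℂ M} (hΩ : Ω ∈ ⋀[ℂ]^2 M) :
    P Ω := by
  rw [ExteriorAlgebra.exteriorPower, pow_two] at hΩ
  refine Submodule.mul_induction_on hΩ ?_ hadd
  rintro _ ⟨a, rfl⟩ _ ⟨b, rfl⟩
  exact hι a b

lemma ι_mem (a : M) : ExteriorAlgebra.ι ℂ a ∈ ⋀[ℂ]^1 M := by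
  rw [ExteriorAlgebra.exteriorPower, pow_one]
  exact ⟨a, rfl⟩

lemma ι_mul_ι_mem (a b : M) :
    ExteriorAlgebra.ι ℂ a * ExteriorAlgebra.ι ℂ b ∈ ⋀[ℂ]^2 M := by
  rw [ExteriorAlgebra.exteriorPower, pow_two]
  exact Submodule.mul_mem_mul ⟨a, rfl⟩ ⟨b, rfl⟩

lemma deg_two_commute_ι {Ω : ExteriorAlgebra ℂ M} (hΩ : Ω ∈ ⋀[ℂ]^2 M) (c : M) :
    Commute Ω (ExteriorAlgebra.ι ℂ c) := by
  refine deg_two_induction (P := fun x => Commute x (ExteriorAlgebra.ι ℂ c))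
    (fun a b => ?_) (fun x y hx hy => hx.add_left hy) hΩ
  change _ * _ = _ * _
  rw [mul_assoc, ι_mul_swap b c, mul_neg, ← mul_assoc, ι_mul_swap a c, neg_mul, neg_neg,
    mul_assoc]

lemma deg_two_commute {Ω Ψ : ExteriorAlgebra ℂ M} (hΩ : Ω ∈ ⋀[ℂ]^2 M)
    (hΨ : Ψ ∈ ⋀[ℂ]^2 M) : Commute Ω Ψ :=
  deg_two_induction (P := fun x => Commute Ω x)
    (fun a b => (deg_two_commute_ι hΩ a).mul_right (deg_two_commute_ι hΩ b))
    (fun _ _ hx hy => hx.add_right hy) hΨ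

/-- Contraction is an antiderivation, so no sign appears when it passes an even element. -/
lemma contr_deg_two_mul {Ω : ExteriorAlgebra ℂ M} (hΩ : Ω ∈ ⋀[ℂ]^2 M)
    (d : Module.Dual ℂ M) (x : ExteriorAlgebra ℂ M) :
    contr d (Ω * x) = contr d Ω * x + Ω * contr d x := by
  refine deg_two_induction (P := fun y => contr d (y * x) = contr d y * x + y * contr d x)
    (fun a b => ?_) (fun y z hy hz => ?_) hΩ
  · rw [contr_ι_mul_ι, mul_assoc, contr_ι_mul, contr_ι_mul]
    simp only [mul_sub, sub_mul, smul_mul_assoc, mul_smul_comm, mul_assoc]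
    abel
  · rw [add_mul, map_add, hy, hz, map_add]
    simp only [add_mul]
    abel

/-- There are no nonzero elements of degree greater than the dimension. -/
lemma eq_zero_of_finrank_lt [FiniteDimensional ℂ M] {m : ℕ} (hm : Module.finrank ℂ M < m)
    {x : ExteriorAlgebra ℂ M} (hx : x ∈ ⋀[ℂ]^m M) : x = 0 := by
  rw [← ExteriorAlgebra.ιMulti_span_fixedDegree] at hx
  refine Submodule.span_induction ?_ rfl (fun x y _ _ hx hy => by rw [hx, hy, add_zero])
    (fun c x _ hx => by rw [hx, smul_zero]) hx
  rintro _ ⟨v, rfl⟩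
  refine AlternatingMap.map_linearDependent _ v fun hv => ?_
  have := hv.fintype_card_le_finrank
  simp at this
  omega

/-- If contraction with `d` annihilates `w` and sends `Ω` to a multiple of `w`, it
annihilates every `Ω ^ k ∧ w`; and a top-degree element annihilated by a contraction with `d ≠ 0`
is zero. -/
lemma pow_mul_ι_eq_zero [FiniteDimensional ℂ M] {p : ℕ} (hM : Module.finrank ℂ M = 2 * p + 1)
    {Ω : ExteriorAlgebra ℂ M} (hΩ : Ω ∈ ⋀[ℂ]^2 M) {w : M} {d : Module.Dual ℂ M}
    (hd : d ≠ 0) (hw : d w = 0) {c : ℂ} (hc : contr d Ω = c • ExteriorAlgebra.ι ℂ w) :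
    Ω ^ p * ExteriorAlgebra.ι ℂ w = 0 := by
  have key : ∀ k : ℕ, contr d (Ω ^ k * ExteriorAlgebra.ι ℂ w) = 0 := by
    intro k
    induction k with
    | zero => simp [contr_ι, hw]
    | succ k ih =>
      rw [pow_succ', mul_assoc, contr_deg_two_mul hΩ, ih, hc,
        ((deg_two_commute_ι hΩ w).pow_left k).eq, smul_mul_assoc, ← mul_assoc,
        ExteriorAlgebra.ι_sq_zero]
      simp
  obtain ⟨a, ha⟩ : ∃ a, d a = 1 := by
    obtain ⟨b, hb⟩ := DFunLike.ne_iff.mp hd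
    refine ⟨(d b)⁻¹ • b, ?_⟩
    rw [map_smul, smul_eq_mul]
    exact inv_mul_cancel₀ hb
  have h0 : ExteriorAlgebra.ι ℂ a * (Ω ^ p * ExteriorAlgebra.ι ℂ w) = 0 := by
    refine eq_zero_of_finrank_lt (m := 1 + (2 * p + 1)) (by omega) ?_
    have h1 : Ω ^ p ∈ (⋀[ℂ]^2 M) ^ p := Submodule.pow_mem_pow _ hΩ p
    have h2 := Submodule.mul_mem_mul (ι_mem a) (Submodule.mul_mem_mul h1 (ι_mem w))
    simp only [ExteriorAlgebra.exteriorPower, ← pow_mul, ← pow_add] at h2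
    exact h2
  have := contr_ι_mul d a (Ω ^ p * ExteriorAlgebra.ι ℂ w)
  rw [h0, key, ha] at this
  simpa using this.symm

lemma add_pow_of_sq_zero {A : Type*} [Ring A] {s u : A} (hc : Commute s u) (hu : u * u = 0)
    (k : ℕ) : (s + u) ^ (k + 1) = s ^ (k + 1) + (k + 1 : ℕ) * (s ^ k * u) := by
  induction k with
  | zero => simp
  | succ k ih =>
    have e1 : s ^ k * u * s = s ^ (k + 1) * u := by
      rw [mul_assoc, ← hc.eq, ← mul_assoc, pow_succ]
    have e2 : s ^ k * u * u = 0 := by rw [mul_assoc, hu, mul_zero]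
    rw [pow_succ, ih, add_mul, mul_add, mul_add, mul_assoc ((k + 1 : ℕ) : A),
      mul_assoc ((k + 1 : ℕ) : A), e1, e2, mul_zero, ← pow_succ]
    push_cast
    noncomm_ring

/-- The standard contact form has nonzero volume: for a family `e` with biorthogonal `d`,
`(∑_{k<m} e_{2k} ∧ e_{2k+1})^m ∧ e_{2p} ≠ 0`. Contracting with `d_{2m+1}` and `d_{2m}`
removes one factor at a time. -/
lemma sum_pow_mul_ι_ne_zero {p : ℕ} (e : ℕ → M) (d : ℕ → Module.Dual ℂ M)
    (hde : ∀ i ≤ 2 * p, ∀ j ≤ 2 * p, d i (e j) = if i = j then 1 else 0) (m : ℕ) (hm : m ≤ p) :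
    (∑ k ∈ Finset.range m, ExteriorAlgebra.ι ℂ (e (2 * k)) *
      ExteriorAlgebra.ι ℂ (e (2 * k + 1))) ^ m * ExteriorAlgebra.ι ℂ (e (2 * p)) ≠ 0 := by
  set u : ℕ → ExteriorAlgebra ℂ M := fun k => ExteriorAlgebra.ι ℂ (e (2 * k)) *
      ExteriorAlgebra.ι ℂ (e (2 * k + 1)) with hu
  have hu2 : ∀ k, u k ∈ ⋀[ℂ]^2 M := fun k => ι_mul_ι_mem _ _
  have hS2 : ∀ m, ∑ k ∈ Finset.range m, u k ∈ ⋀[ℂ]^2 M := fun m =>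
    Submodule.sum_mem _ fun k _ => hu2 k
  have huu : ∀ k, u k * u k = 0 := by
    intro k
    have := (deg_two_commute_ι (hu2 k) (e (2 * k))).eq
    calc u k * u k = u k * ExteriorAlgebra.ι ℂ (e (2 * k)) *
        ExteriorAlgebra.ι ℂ (e (2 * k + 1)) := by simp only [hu, mul_assoc]
      _ = 0 := by
        rw [this]
        simp only [hu]
        rw [← mul_assoc, ExteriorAlgebra.ι_sq_zero, zero_mul, zero_mul]
  have hnil : ∀ m, (∑ k ∈ Finset.range m, u k) ^ (m + 1) = 0 := by
    intro m
    induction m with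
    | zero => simp
    | succ m ih =>
      rw [Finset.sum_range_succ,
        add_pow_of_sq_zero (deg_two_commute (hS2 m) (hu2 m)) (huu m), pow_succ, ih]
      simp
  have hcS : ∀ m i, 2 * m ≤ i → i < 2 * p → contr (d i) (∑ k ∈ Finset.range m, u k) = 0 := by
    intro m i hi hip
    rw [map_sum]
    refine Finset.sum_eq_zero fun k hk => ?_
    have hk := Finset.mem_range.mp hk
    simp only [hu]
    rw [contr_ι_mul_ι, hde i (by omega) _ (by omega), hde i (by omega) _ (by omega),
      if_neg (by omega), if_neg (by omega)]
    simp
  have hcz : ∀ m i, 2 * m ≤ i → i < 2 * p → ∀ r,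
      contr (d i) ((∑ k ∈ Finset.range m, u k) ^ r * ExteriorAlgebra.ι ℂ (e (2 * p))) = 0 := by
    intro m i hi hip r
    induction r with
    | zero => simp [contr_ι, hde i (by omega) (2 * p) le_rfl, hip.ne]
    | succ r ih =>
      rw [pow_succ', mul_assoc, contr_deg_two_mul (hS2 m), ih, hcS m i hi hip]
      simp
  induction m with
  | zero =>
    intro h0
    have := contr_ι (d (2 * p)) (e (2 * p))
    simp only [pow_zero, one_mul] at h0
    rw [h0, hde _ le_rfl _ le_rfl] at this
    simp at this
  | succ m ih =>
    intro h0
    refine ih (by omega) ?_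
    set z := (∑ k ∈ Finset.range m, u k) ^ m * ExteriorAlgebra.ι ℂ (e (2 * p)) with hz
    rw [Finset.sum_range_succ,
      add_pow_of_sq_zero (deg_two_commute (hS2 m) (hu2 m)) (huu m), hnil, zero_add,
      ((deg_two_commute (hS2 m) (hu2 m)).pow_left m).eq, mul_assoc, mul_assoc, ← hz,
      ← nsmul_eq_mul, ← Nat.cast_smul_eq_nsmul ℂ, smul_eq_zero] at h0
    have h0 := h0.resolve_left (by exact_mod_cast Nat.succ_ne_zero m)
    have h1 : contr (d (2 * m)) (u m * z) = ExteriorAlgebra.ι ℂ (e (2 * m + 1)) * z := by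
      rw [contr_deg_two_mul (hu2 m), hcz m (2 * m) le_rfl (by omega) m]
      simp only [hu]
      rw [contr_ι_mul_ι, hde _ (by omega) _ (by omega), hde _ (by omega) _ (by omega)]
      simp
    have h2 := contr_ι_mul (d (2 * m + 1)) (e (2 * m + 1)) z
    rw [← h1, h0, hcz m (2 * m + 1) (by omega) (by omega) m, hde _ (by omega) _ (by omega)] at h2
    simpa using h2.symm

end Exterior

/-! ### The exterior derivative of a linear form -/

/-- The exterior derivative `dω(X, Y) = -ω(μ(X, Y))` as a bilinear form. -/
def dForm {n : ℕ} (μ : Bil n) (ω : Module.Dual ℂ (E n)) : E n →ₗ[ℂ] E n →ₗ[ℂ] ℂ :=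
  LinearMap.mk₂ ℂ (fun X Y => -ω (μ X Y)) (by intros; simp; ring) (by intros; simp)
    (by intros; simp; ring) (by intros; simp)

lemma dForm_apply {n : ℕ} (μ : Bil n) (ω : Module.Dual ℂ (E n)) (X Y : E n) :
    dForm μ ω X Y = -ω (μ X Y) := rfl

lemma isAlt_dForm {n : ℕ} {μ : Bil n} (hμ : IsAlt μ) (ω : Module.Dual ℂ (E n)) :
    (dForm μ ω).IsAlt := by
  intro X
  rw [dForm_apply, hμ X]
  simp

lemma twoFormEl_mem (n : ℕ) (β : E n → E n → ℂ) :
    twoFormEl n β ∈ ⋀[ℂ]^2 (Module.Dual ℂ (E n)) :=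
  Submodule.sum_mem _ fun _ _ => Submodule.smul_mem _ _ (ι_mul_ι_mem _ _)

lemma dual_eq_sum {n : ℕ} (η : Module.Dual ℂ (E n)) :
    η = ∑ i, η (Pi.single i 1) • (LinearMap.proj i : Module.Dual ℂ (E n)) := by
  refine LinearMap.pi_ext' fun i => LinearMap.ext_ring ?_
  simp [Pi.single_apply]

/-- Summing over all pairs instead of increasing ones counts each term twice; this form is
the one that is visibly independent of the basis. -/
lemma two_smul_twoFormEl {n : ℕ} {B : E n →ₗ[ℂ] E n →ₗ[ℂ] ℂ} (hB : B.IsAlt) :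
    (2 : ℂ) • twoFormEl n (fun X Y => B X Y) = ∑ i, ∑ j, B (Pi.single i 1) (Pi.single j 1) •
      (ExteriorAlgebra.ι ℂ (LinearMap.proj i : Module.Dual ℂ (E n)) *
        ExteriorAlgebra.ι ℂ (LinearMap.proj j : Module.Dual ℂ (E n))) := by
  set g : Fin n × Fin n → ExteriorAlgebra ℂ (Module.Dual ℂ (E n)) := fun q =>
    B (Pi.single q.1 1) (Pi.single q.2 1) •
      (ExteriorAlgebra.ι ℂ (LinearMap.proj q.1 : Module.Dual ℂ (E n)) *
        ExteriorAlgebra.ι ℂ (LinearMap.proj q.2 : Module.Dual ℂ (E n))) with hg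
  have hswap : ∀ q, g q.swap = g q := by
    intro q
    simp only [hg, Prod.fst_swap, Prod.snd_swap]
    rw [← hB.neg, ι_mul_swap, smul_neg, neg_smul, neg_neg]
  have hdiag : ∀ q : Fin n × Fin n, q.1 = q.2 → g q = 0 := by
    rintro ⟨i, j⟩ h
    obtain rfl : i = j := h
    simp [hg, hB.self_eq_zero]
  have e1 : twoFormEl n (fun X Y => B X Y) = ∑ q : Fin n × Fin n, if q.1 < q.2 then g q else 0 := by
    rw [twoFormEl, Finset.sum_filter]
  have e2 : twoFormEl n (fun X Y => B X Y) = ∑ q : Fin n × Fin n, if q.2 < q.1 then g q else 0 := by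
    rw [e1, ← (Equiv.prodComm (Fin n) (Fin n)).sum_comp]
    refine Finset.sum_congr rfl fun q _ => ?_
    simp only [Equiv.prodComm_apply, hswap, Prod.fst_swap, Prod.snd_swap]
  rw [two_smul]
  nth_rewrite 1 [e1]
  rw [e2, ← Finset.sum_add_distrib, ← Fintype.sum_prod_type']
  refine Finset.sum_congr rfl fun q _ => ?_
  rcases lt_trichotomy q.1 q.2 with h | h | h
  · simp [h, h.not_gt, hg]
  · have := hdiag q h
    simp only [this, ite_self, add_zero]
    exact this.symm
  · simp [h, h.not_gt, hg]

/-- Contracting a 2-form with `X` gives the linear form `B(X, ·)`. -/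
lemma contr_twoFormEl {n : ℕ} {B : E n →ₗ[ℂ] E n →ₗ[ℂ] ℂ} (hB : B.IsAlt) (X : E n) :
    contr (Module.Dual.eval ℂ (E n) X) (twoFormEl n fun X Y => B X Y) =
      ExteriorAlgebra.ι ℂ (B X) := by
  have hX : X = ∑ i, X i • Pi.single i (1 : ℂ) := by
    ext j; simp [Finset.sum_apply, Pi.single_apply]
  have hBX : ∀ j, B X (Pi.single j 1) = ∑ i, X i * B (Pi.single i 1) (Pi.single j 1) := by
    intro j
    conv_lhs => rw [hX]
    simp [LinearMap.sum_apply]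
  have h2 : (2 : ℂ) • contr (Module.Dual.eval ℂ (E n) X) (twoFormEl n fun X Y => B X Y) =
      (2 : ℂ) • ExteriorAlgebra.ι ℂ (B X) := by
    rw [← map_smul, two_smul_twoFormEl hB]
    have e : ExteriorAlgebra.ι ℂ (B X) = ∑ i, ∑ j, (B (Pi.single i 1) (Pi.single j 1) * X i) •
        ExteriorAlgebra.ι ℂ (LinearMap.proj j : Module.Dual ℂ (E n)) := by
      conv_lhs => rw [dual_eq_sum (B X)]
      rw [Finset.sum_comm]
      simp only [map_sum, map_smul, hBX, Finset.sum_smul, mul_comm]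
    have e' : ExteriorAlgebra.ι ℂ (B X) = -∑ i, ∑ j, (B (Pi.single i 1) (Pi.single j 1) * X j) •
        ExteriorAlgebra.ι ℂ (LinearMap.proj i : Module.Dual ℂ (E n)) := by
      rw [e, Finset.sum_comm, ← Finset.sum_neg_distrib]
      refine Finset.sum_congr rfl fun i _ => ?_
      rw [← Finset.sum_neg_distrib]
      refine Finset.sum_congr rfl fun j _ => ?_
      rw [← hB.neg, neg_mul, neg_smul]
    rw [two_smul]
    nth_rewrite 1 [e]
    rw [e', ← sub_eq_add_neg]
    simp only [map_sum, map_smul, contr_ι_mul_ι, smul_sub, smul_smul, Finset.sum_sub_distrib]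
    rfl
  exact smul_right_injective _ (two_ne_zero (α := ℂ)) h2

/-- The element `twoFormEl` does not depend on the basis: it is compatible with pullback. -/
lemma map_twoFormEl {n : ℕ} {B : E n →ₗ[ℂ] E n →ₗ[ℂ] ℂ} (hB : B.IsAlt) (f : E n →ₗ[ℂ] E n) :
    ExteriorAlgebra.map f.dualMap (twoFormEl n fun X Y => B X Y) =
      twoFormEl n fun X Y => B (f X) (f Y) := by
  have hB' : (B.compl₁₂ f f).IsAlt := fun X => hB (f X)
  have hf : ∀ k, f (Pi.single k 1) = ∑ i, f (Pi.single k 1) i • Pi.single i (1 : ℂ) := by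
    intro k
    ext j; simp [Finset.sum_apply, Pi.single_apply]
  have hp : ∀ i, f.dualMap (LinearMap.proj i) =
      ∑ k, f (Pi.single k 1) i • (LinearMap.proj k : Module.Dual ℂ (E n)) := fun i =>
    dual_eq_sum _
  have h2 : (2 : ℂ) • ExteriorAlgebra.map f.dualMap (twoFormEl n fun X Y => B X Y) =
      (2 : ℂ) • twoFormEl n fun X Y => B.compl₁₂ f f X Y := by
    rw [← map_smul, two_smul_twoFormEl hB, two_smul_twoFormEl hB']
    simp only [map_sum, map_smul, map_mul, ExteriorAlgebra.map_apply_ι, hp,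
      LinearMap.compl₁₂_apply]
    have hBf : ∀ k l, B (f (Pi.single k 1)) (f (Pi.single l 1)) = ∑ i, ∑ j,
        B (Pi.single i 1) (Pi.single j 1) * (f (Pi.single k 1) i * f (Pi.single l 1) j) := by
      intro k l
      conv_lhs => rw [hf k, hf l]
      simp only [map_sum, map_smul, LinearMap.sum_apply, LinearMap.smul_apply, smul_eq_mul,
        Finset.mul_sum]
      rw [Finset.sum_comm]
      refine Finset.sum_congr rfl fun i _ => Finset.sum_congr rfl fun j _ => by ring
    simp only [hBf, Finset.sum_mul_sum, Finset.sum_smul, Finset.smul_sum, smul_mul_smul_comm,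
      smul_smul]
    -- move the summations over the new basis outside those over the old one
    have comm4 : ∀ F : Fin n → Fin n → Fin n → Fin n → ExteriorAlgebra ℂ (Module.Dual ℂ (E n)),
        ∑ i, ∑ j, ∑ k, ∑ l, F i j k l = ∑ k, ∑ l, ∑ i, ∑ j, F i j k l := by
      intro F
      calc _ = ∑ i, ∑ k, ∑ l, ∑ j, F i j k l := Finset.sum_congr rfl fun i _ => by
            rw [Finset.sum_comm]
            exact Finset.sum_congr rfl fun k _ => Finset.sum_comm
        _ = _ := by
            rw [Finset.sum_comm]
            exact Finset.sum_congr rfl fun k _ => Finset.sum_comm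
    exact comm4 _
  exact smul_right_injective _ (two_ne_zero (α := ℂ)) h2

/-- The property of carrying a contact form passes from a point of the orbit to the law. -/
lemma IsContact.of_orbit {n p : ℕ} {μ ν : Bil n} (hμ : IsAlt μ) (hν : ν ∈ orbit μ)
    {ω : Module.Dual ℂ (E n)} (h : IsContact ν ω p) : ∃ ω', IsContact μ ω' p := by
  obtain ⟨f, hf⟩ := hν
  set g : E n →ₗ[ℂ] E n := f.toLinearEquiv.toLinearMap with hg
  set ω' : Module.Dual ℂ (E n) := ω ∘ₗ f.symm.toLinearEquiv.toLinearMap with hω'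
  refine ⟨ω', fun h0 => h ?_⟩
  have e1 : g.dualMap ω' = ω := by
    ext x; simp [hg, hω']
  have e2 := map_twoFormEl (isAlt_dForm hμ ω') g
  have := congrArg (ExteriorAlgebra.map g.dualMap) h0
  rw [map_mul, map_pow, map_zero, ExteriorAlgebra.map_apply_ι, e1] at this
  rw [← this]
  congr 2
  refine Eq.trans ?_ e2.symm
  congr 1
  funext X Y
  simp [dForm_apply, hf, hω', hg]

/-- Every coordinate of `x ∧ (dω)^p` is polynomial in the structure constants, hence continuous. -/
lemma continuous_functional {n : ℕ} (ω : Module.Dual ℂ (E n))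
    (φ : Module.Dual ℂ (ExteriorAlgebra ℂ (Module.Dual ℂ (E n)))) (p : ℕ)
    (x : ExteriorAlgebra ℂ (Module.Dual ℂ (E n))) :
    Continuous fun ν : Bil n => φ (x * (twoFormEl n fun X Y => -ω (ν X Y)) ^ p) := by
  induction p generalizing x with
  | zero => simpa using continuous_const
  | succ p ih =>
    have hω : Continuous ω := LinearMap.continuous_of_finiteDimensional ω
    have e : (fun ν : Bil n => φ (x * (twoFormEl n fun X Y => -ω (ν X Y)) ^ (p + 1))) =
        fun ν : Bil n => ∑ q ∈ Finset.univ.filter (fun q : Fin n × Fin n => q.1 < q.2),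
          -ω (ν (Pi.single q.1 1) (Pi.single q.2 1)) *
            φ (x * (ExteriorAlgebra.ι ℂ (LinearMap.proj q.1 : Module.Dual ℂ (E n)) *
              ExteriorAlgebra.ι ℂ (LinearMap.proj q.2 : Module.Dual ℂ (E n))) *
                (twoFormEl n fun X Y => -ω (ν X Y)) ^ p) := by
      funext ν
      rw [pow_succ', ← mul_assoc]
      conv_lhs => rw [twoFormEl]
      simp only [Finset.mul_sum, Finset.sum_mul, map_sum, mul_smul_comm, smul_mul_assoc,
        map_smul, smul_eq_mul]
      rfl
    rw [e]
    refine continuous_finsetSum _ fun q _ => Continuous.mul ?_ (ih _)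
    exact (hω.comp (by fun_prop)).neg

lemma isOpen_isContact {n : ℕ} (ω : Module.Dual ℂ (E n)) (p : ℕ) :
    IsOpen {ν : Bil n | IsContact ν ω p} := by
  have : {ν : Bil n | IsContact ν ω p} =
      ⋃ φ : Module.Dual ℂ (ExteriorAlgebra ℂ (Module.Dual ℂ (E n))),
        {ν : Bil n | φ (ExteriorAlgebra.ι ℂ ω * (twoFormEl n fun X Y => -ω (ν X Y)) ^ p) ≠ 0} := by
    ext ν
    simp only [Set.mem_iUnion, Set.mem_ofPred_eq, IsContact]
    rw [← not_iff_not]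
    push Not
    exact (Module.forall_dual_apply_eq_zero_iff ℂ _).symm
  rw [this]
  exact isOpen_iUnion fun φ => isOpen_ne_fun (continuous_functional ω φ p _) continuous_const

/-! ### Adapted frames -/

/-- Symplectic Gram–Schmidt: a nondegenerate alternating form on a space of dimension at least
`2k` has `k` mutually orthogonal hyperbolic pairs `(a i, b i)`. -/
lemma exists_symplectic_family {V : Type*} [AddCommGroup V] [Module ℂ V] [FiniteDimensional ℂ V]
    (B : V →ₗ[ℂ] V →ₗ[ℂ] ℂ) (hB : B.IsAlt) (hnd : ∀ x, (∀ y, B x y = 0) → x = 0) (k : ℕ)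
    (hk : 2 * k ≤ Module.finrank ℂ V) :
    ∃ a b : ℕ → V, ∀ i < k, ∀ j < k, B (a i) (a j) = 0 ∧ B (b i) (b j) = 0 ∧
      B (a i) (b j) = if i = j then 1 else 0 := by
  induction k with
  | zero => exact ⟨0, 0, by simp⟩
  | succ k ih =>
    obtain ⟨a, b, hab⟩ := ih (by omega)
    -- a nonzero `u` orthogonal to the pairs already found exists for dimension reasons
    let L : V →ₗ[ℂ] (Fin k → ℂ) × (Fin k → ℂ) :=
      (LinearMap.pi fun i : Fin k => B (a i)).prod (LinearMap.pi fun i : Fin k => B (b i))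
    have hL : LinearMap.ker L ≠ ⊥ := LinearMap.ker_ne_bot_of_finrank_lt (by simp; omega)
    obtain ⟨u, huL, hu0⟩ := (Submodule.ne_bot_iff _).mp hL
    have hLu : L u = 0 := huL
    have hau : ∀ i < k, B (a i) u = 0 := fun i hi => congrFun (congrArg Prod.fst hLu) ⟨i, hi⟩
    have hbu : ∀ i < k, B (b i) u = 0 := fun i hi => congrFun (congrArg Prod.snd hLu) ⟨i, hi⟩
    have hua : ∀ i < k, B u (a i) = 0 := fun i hi => by rw [← hB.neg, hau i hi, neg_zero]
    have hub : ∀ i < k, B u (b i) = 0 := fun i hi => by rw [← hB.neg, hbu i hi, neg_zero]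
    obtain ⟨w₀, hw₀⟩ : ∃ y, B u y ≠ 0 := by
      by_contra! h
      exact hu0 (hnd u h)
    obtain ⟨w₁, hw₁⟩ : ∃ y, B u y = 1 :=
      ⟨(B u w₀)⁻¹ • w₀, by rw [map_smul, smul_eq_mul, inv_mul_cancel₀ hw₀]⟩
    -- remove from `w₁` its component along the pairs already found
    let w : V := w₁ + ∑ i ∈ Finset.range k, (B w₁ (a i) • b i - B w₁ (b i) • a i)
    have huw : B u w = 1 := by
      simp only [w, map_add, map_sum, map_sub, map_smul, hw₁]
      rw [Finset.sum_eq_zero, add_zero]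
      intro i hi
      have hi := Finset.mem_range.mp hi
      simp [hua i hi, hub i hi]
    have haw : ∀ j < k, B (a j) w = 0 := by
      intro j hj
      simp only [w, map_add, map_sum, map_sub, map_smul]
      rw [Finset.sum_eq_single_of_mem j (Finset.mem_range.mpr hj)]
      · simp only [(hab j hj j hj).1, (hab j hj j hj).2.2, if_true, ← hB.neg w₁ (a j)]
        simp
      · intro i hi hij
        have hi := Finset.mem_range.mp hi
        simp [(hab j hj i hi).1, (hab j hj i hi).2.2, hij.symm]
    have hbw : ∀ j < k, B (b j) w = 0 := by
      intro j hj
      simp only [w, map_add, map_sum, map_sub, map_smul]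
      rw [Finset.sum_eq_single_of_mem j (Finset.mem_range.mpr hj)]
      · rw [(hab j hj j hj).2.1, ← hB.neg (a j) (b j), (hab j hj j hj).2.2, ← hB.neg w₁ (b j)]
        simp
      · intro i hi hij
        have hi := Finset.mem_range.mp hi
        rw [(hab j hj i hi).2.1, ← hB.neg (a i) (b j), (hab i hi j hj).2.2]
        simp [hij]
    refine ⟨Function.update a k u, Function.update b k w, fun i hi j hj => ?_⟩
    rcases Nat.lt_succ_iff_lt_or_eq.mp hi with hi | rfl <;>
      rcases Nat.lt_succ_iff_lt_or_eq.mp hj with hj | rfl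
    · simpa [hi.ne, hj.ne] using hab i hi j hj
    · simp [hi.ne, hau i hi, haw i hi, hbw i hi]
    · refine ⟨?_, ?_, ?_⟩
      · simp [hj.ne, hua j hj]
      · simp only [Function.update_self, ne_eq, hj.ne, not_false_eq_true,
          Function.update_of_ne]
        rw [← hB.neg, hbw j hj, neg_zero]
      · simp [hj.ne, hj.ne', hub j hj]
    · simp [hB.self_eq_zero, huw]

/-- If `ω` is a contact form, `dω` is nondegenerate on `ker ω`. -/
lemma IsContact.nondegenerate {p : ℕ} {μ : Bil (2 * p + 1)} (hμ : IsAlt μ)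
    {ω : Module.Dual ℂ (E (2 * p + 1))} (h : IsContact μ ω p) {R : E (2 * p + 1)} (hR : ω R = 1)
    (X : E (2 * p + 1)) (hX : ω X = 0) (hXY : ∀ Y, ω Y = 0 → ω (μ X Y) = 0) : X = 0 := by
  by_contra hX0
  apply h
  have hΩ := twoFormEl_mem (2 * p + 1) fun X Y => dForm μ ω X Y
  have hc : dForm μ ω X = (dForm μ ω X R) • ω := by
    ext1 i
    ext1
    set Y : E (2 * p + 1) := Pi.single i 1
    have h1 := hXY (Y - ω Y • R) (by simp [hR])
    have h2 : dForm μ ω X (Y - ω Y • R) = 0 := by rw [dForm_apply, h1, neg_zero]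
    rw [map_sub, map_smul, sub_eq_zero] at h2
    change dForm μ ω X Y = dForm μ ω X R * ω Y
    rw [h2, smul_eq_mul, mul_comm]
  rw [← ((deg_two_commute_ι (twoFormEl_mem _ _) ω).pow_left p).eq]
  refine pow_mul_ι_eq_zero (d := Module.Dual.eval ℂ _ X) (c := dForm μ ω X R) ?_ hΩ ?_ hX ?_
  · rw [Subspace.dual_finrank_eq]; simp
  · rw [Ne, Module.eval_apply_eq_zero_iff]
    exact hX0
  · rw [contr_twoFormEl (isAlt_dForm hμ ω) X, ← map_smul, ← hc]

/-- A contact form yields a frame `f` in which `ω` is the last coordinate and `-dω` restricted to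
`ker ω` has the Heisenberg structure constants. -/
lemma IsContact.exists_frame {p : ℕ} {μ : Bil (2 * p + 1)} (hμ : IsAlt μ)
    {ω : Module.Dual ℂ (E (2 * p + 1))} (h : IsContact μ ω p) :
    ∃ f : E (2 * p + 1) ≃L[ℂ] E (2 * p + 1), (∀ x, ω (f x) = x (Fin.last (2 * p))) ∧
      ∀ i j, i ≠ Fin.last (2 * p) → j ≠ Fin.last (2 * p) →
        ω (μ (f (Pi.single i 1)) (f (Pi.single j 1))) = heisC p i j (Fin.last (2 * p)) := by
  have hω : ω ≠ 0 := by
    rintro rfl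
    exact h (by simp)
  obtain ⟨R, hR⟩ : ∃ R, ω R = 1 := by
    obtain ⟨S, hS⟩ := DFunLike.ne_iff.mp hω
    refine ⟨(ω S)⁻¹ • S, ?_⟩
    rw [map_smul, smul_eq_mul]
    exact inv_mul_cancel₀ hS
  let C : LinearMap.ker ω →ₗ[ℂ] LinearMap.ker ω →ₗ[ℂ] ℂ :=
    (-dForm μ ω).domRestrict₁₂ (LinearMap.ker ω) (LinearMap.ker ω)
  have hC : ∀ x y, C x y = ω (μ x y) := fun x y => neg_neg (ω (μ x y))
  have hCalt : C.IsAlt := fun x => by rw [hC, hμ, map_zero]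
  have hCnd : ∀ x, (∀ y, C x y = 0) → x = 0 := by
    intro x hx
    refine Subtype.ext (h.nondegenerate hμ hR x x.2 fun Y hY => ?_)
    rw [← hx ⟨Y, hY⟩, hC]
  have hrank : 2 * p ≤ Module.finrank ℂ (LinearMap.ker ω) := by
    have := Module.Dual.finrank_ker_add_one_of_ne_zero hω
    simp at this
    omega
  obtain ⟨a, b, hab⟩ := exists_symplectic_family C hCalt hCnd p hrank
  let F : Fin (2 * p + 1) → E (2 * p + 1) := fun i =>
    if i = Fin.last (2 * p) then R else if (i : ℕ) % 2 = 0 then a (i / 2) else b (i / 2)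
  have hωF : ∀ i, ω (F i) = if i = Fin.last (2 * p) then 1 else 0 := by
    intro i
    simp only [F]
    split_ifs
    · exact hR
    · exact (a _).2
    · exact (b _).2
  have hF : ∀ i j, i ≠ Fin.last (2 * p) → j ≠ Fin.last (2 * p) →
      ω (μ (F i) (F j)) = heisC p i j (Fin.last (2 * p)) := by
    intro i j hi hj
    have hi' : (i : ℕ) < 2 * p := Fin.val_lt_last hi
    have hj' : (j : ℕ) < 2 * p := Fin.val_lt_last hj
    obtain ⟨haa, hbb, hab'⟩ := hab (i / 2) (by omega) (j / 2) (by omega)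
    obtain ⟨-, -, hba⟩ := hab (j / 2) (by omega) (i / 2) (by omega)
    have hba' := hCalt.neg (a (j / 2)) (b (i / 2))
    rw [hba] at hba'
    simp only [F, hi, hj, if_false, heisC]
    split_ifs at * <;> simp only [← hC, haa, hbb, hab', ← hba', Pi.single_eq_same, Pi.neg_apply,
      Pi.zero_apply, neg_zero] <;> omega
  let fl : E (2 * p + 1) →ₗ[ℂ] E (2 * p + 1) := Fintype.linearCombination ℂ F
  have hfl : ∀ x, fl x = ∑ i, x i • F i := fun x => rfl
  have hωfl : ∀ x, ω (fl x) = x (Fin.last (2 * p)) := by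
    intro x
    simp [hfl, hωF]
  have hinj : Function.Injective fl := by
    rw [injective_iff_map_eq_zero]
    intro x hx
    have hlast : x (Fin.last (2 * p)) = 0 := by
      rw [← hωfl x, hx, map_zero]
    have hpair : ∀ j, j ≠ Fin.last (2 * p) →
        ∑ i, x i * heisC p i j (Fin.last (2 * p)) = 0 := by
      intro j hj
      have h0 : ω (μ (fl x) (F j)) = 0 := by rw [hx]; simp
      rw [← h0, hfl]
      simp only [map_sum, map_smul, sum_apply, smul_apply, smul_eq_mul]
      refine Finset.sum_congr rfl fun i _ => ?_
      by_cases hi : i = Fin.last (2 * p)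
      · rw [hi, hlast, zero_mul, zero_mul]
      · rw [hF i j hi hj]
    funext j
    by_cases hj : j = Fin.last (2 * p)
    · rw [hj, hlast]; rfl
    have hj' : (j : ℕ) < 2 * p := Fin.val_lt_last hj
    -- pair with the conjugate vector of the hyperbolic plane containing `F j`
    let j' : Fin (2 * p + 1) := ⟨if (j : ℕ) % 2 = 0 then j + 1 else j - 1, by split_ifs <;> omega⟩
    have hj'v : (j' : ℕ) = if (j : ℕ) % 2 = 0 then (j : ℕ) + 1 else j - 1 := rfl
    have hj'l : j' ≠ Fin.last (2 * p) := by
      intro h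
      have := congrArg Fin.val h
      rw [hj'v, Fin.val_last] at this
      split_ifs at this <;> omega
    have hs := hpair j' hj'l
    rw [Finset.sum_eq_single j] at hs
    · refine (mul_eq_zero.mp hs).resolve_right ?_
      simp only [heisC, hj'v]
      split_ifs <;> first | omega | simp
    · intro i _ hij
      have hij : (i : ℕ) ≠ j := fun h => hij (Fin.ext h)
      simp only [heisC, hj'v]
      split_ifs <;> first | omega | simp
    · simp
  let f := (LinearEquiv.ofInjectiveEndo fl hinj).toContinuousLinearEquiv
  have hf : ∀ x, f x = fl x := fun x => rfl
  refine ⟨f, fun x => by rw [hf, hωfl], fun i j hi hj => ?_⟩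
  have hs : ∀ i, fl (Pi.single i 1) = F i := fun i => by
    simp [fl, Fintype.linearCombination_apply_single]
  rw [hf, hf, hs, hs, hF i j hi hj]

/-! ### Contraction to the Heisenberg law -/

lemma exists_pullback {n : ℕ} (μ : Bil n) (f : E n ≃L[ℂ] E n) :
    ∃ ν : Bil n, ∀ X Y, ν X Y = f.symm (μ (f X) (f Y)) :=
  ⟨(((((ContinuousLinearMap.compL ℂ (E n) (E n) (E n) (f.symm : E n →L[ℂ] E n)).comp μ).flip).comp
    (f : E n →L[ℂ] E n)).flip).comp (f : E n →L[ℂ] E n), fun _ _ => rfl⟩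

/-- Convergence of laws is convergence of their structure constants. -/
lemma tendsto_bil {n : ℕ} {ν : ℕ → Bil n} {h : Bil n}
    (H : ∀ i j k, Filter.Tendsto (fun m => ν m (Pi.single i 1) (Pi.single j 1) k) Filter.atTop
      (nhds (h (Pi.single i 1) (Pi.single j 1) k))) :
    Filter.Tendsto ν Filter.atTop (nhds h) := by
  let L : Bil n →ₗ[ℂ] (Fin n → Fin n → E n) :=
    { toFun := fun ν i j => ν (Pi.single i 1) (Pi.single j 1)
      map_add' := fun _ _ => rfl
      map_smul' := fun _ _ => rfl }
  have hL : LinearMap.ker L = ⊥ := by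
    rw [LinearMap.ker_eq_bot']
    intro ν hν
    have h1 : ∀ i j, ν (Pi.single i 1) (Pi.single j 1) = 0 := fun i j =>
      congrFun (congrFun hν i) j
    refine ContinuousLinearMap.coe_injective (LinearMap.pi_ext' fun i => LinearMap.ext_ring ?_)
    refine ContinuousLinearMap.coe_injective (LinearMap.pi_ext' fun j => LinearMap.ext_ring ?_)
    simpa using h1 i j
  have hemb := LinearMap.isClosedEmbedding_of_injective (𝕜 := ℂ) (E := Bil n)
    (F := Fin n → Fin n → E n) (f := L) hL
  rw [hemb.isInducing.tendsto_nhds_iff, tendsto_pi_nhds]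
  intro i
  rw [tendsto_pi_nhds]
  intro j
  rw [tendsto_pi_nhds]
  exact fun k => H i j k

/-- In an adapted frame, scale `ker ω` by `t` and the last vector by `t²`, and let `t → 0`. -/
lemma IsContact.mem_closure {p : ℕ} {μ : Bil (2 * p + 1)} (hμ : IsAlt μ)
    {ω : Module.Dual ℂ (E (2 * p + 1))} (hc : IsContact μ ω p) {h : Bil (2 * p + 1)}
    (hh : ∀ i j : Fin (2 * p + 1), h (Pi.single i 1) (Pi.single j 1) = heisC p i j) :
    h ∈ closure (orbit μ) := by
  obtain ⟨f, hf, hfμ⟩ := hc.exists_frame hμ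
  let t : ℕ → ℂ := fun m => 1 / ((m : ℂ) + 1)
  have ht0 : ∀ m, t m ≠ 0 := fun m => one_div_ne_zero (Nat.cast_add_one_ne_zero m)
  have ht : Filter.Tendsto t Filter.atTop (nhds 0) :=
    tendsto_one_div_add_atTop_nhds_zero_nat (𝕜 := ℂ)
  let w : Fin (2 * p + 1) → ℕ := fun i => if i = Fin.last (2 * p) then 2 else 1
  let D : ℕ → E (2 * p + 1) ≃L[ℂ] E (2 * p + 1) := fun m =>
    (LinearEquiv.piCongrRight fun i =>
      LinearEquiv.smulOfNeZero ℂ ℂ (t m ^ w i) (pow_ne_zero _ (ht0 m))).toContinuousLinearEquiv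
  have hD : ∀ m x i, D m x i = t m ^ w i * x i := fun m x i => rfl
  have hDs : ∀ m x i, (D m).symm x i = (t m ^ w i)⁻¹ * x i := by
    intro m x i
    have := hD m ((D m).symm x) i
    rw [ContinuousLinearEquiv.apply_symm_apply] at this
    rw [this, inv_mul_cancel_left₀ (pow_ne_zero _ (ht0 m))]
  have hDe : ∀ m i, D m (Pi.single i 1) = t m ^ w i • Pi.single i 1 := by
    intro m i
    ext j
    rw [hD]
    by_cases hij : j = i
    · subst hij; simp
    · simp [hij]
  choose ν hν using fun m => exists_pullback μ ((D m).trans f)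
  refine mem_closure_of_tendsto (tendsto_bil ?_) (Filter.Eventually.of_forall fun m =>
    (⟨(D m).trans f, hν m⟩ : ν m ∈ orbit μ))
  intro i j k
  set G : ℂ := f.symm (μ (f (Pi.single i 1)) (f (Pi.single j 1))) k with hG
  have hval : ∀ m, ν m (Pi.single i 1) (Pi.single j 1) k = t m ^ (w i + w j - w k) * G := by
    intro m
    have hle : w k ≤ w i + w j := by
      simp only [w]; split_ifs <;> omega
    rw [hν, ContinuousLinearEquiv.symm_trans_apply, hDs, ContinuousLinearEquiv.trans_apply,
      ContinuousLinearEquiv.trans_apply, hDe, hDe, pow_sub₀ _ (ht0 m) hle, pow_add, hG]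
    simp only [map_smul, smul_apply, Pi.smul_apply, smul_eq_mul]
    ring
  simp only [hval, hh]
  by_cases hcase : i ≠ Fin.last (2 * p) ∧ j ≠ Fin.last (2 * p) ∧ k = Fin.last (2 * p)
  · obtain ⟨hi, hj, rfl⟩ := hcase
    have hGv : G = heisC p i j (Fin.last (2 * p)) := by
      rw [hG, ← hf (f.symm _), ContinuousLinearEquiv.apply_symm_apply, hfμ i j hi hj]
    simp [w, hi, hj, hGv]
  · have h0 : heisC p i j k = 0 := by
      by_cases hk : k = Fin.last (2 * p)
      · have hij : (i : ℕ) = 2 * p ∨ (j : ℕ) = 2 * p := by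
          by_contra! hne
          exact hcase ⟨fun h => hne.1 (by rw [h]; rfl), fun h => hne.2 (by rw [h]; rfl), hk⟩
        have := i.2
        have := j.2
        simp only [heisC]
        split_ifs <;> first | omega | rfl
      · simp only [heisC]
        split_ifs <;> simp [hk]
    have hpos : w i + w j - w k ≠ 0 := by
      simp only [w]
      split_ifs <;> omega
    rw [h0]
    simpa [hpos] using (ht.pow (w i + w j - w k)).mul_const G

/-- The last coordinate is a contact form on the Heisenberg algebra, since its differential is
`-∑ e_{2k} ∧ e_{2k+1}`. -/
lemma isContact_heis {p : ℕ} {h : Bil (2 * p + 1)}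
    (hh : ∀ i j : Fin (2 * p + 1), h (Pi.single i 1) (Pi.single j 1) = heisC p i j) :
    IsContact h (LinearMap.proj (Fin.last (2 * p))) p := by
  let e : ℕ → Module.Dual ℂ (E (2 * p + 1)) := fun k => LinearMap.proj (Fin.ofNat (2 * p + 1) k)
  let d : ℕ → Module.Dual ℂ (Module.Dual ℂ (E (2 * p + 1))) := fun k =>
    Module.Dual.eval ℂ _ (Pi.single (Fin.ofNat (2 * p + 1) k) 1)
  have hde : ∀ i ≤ 2 * p, ∀ j ≤ 2 * p, d i (e j) = if i = j then 1 else 0 := by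
    intro i hi j hj
    have : Fin.ofNat (2 * p + 1) j = Fin.ofNat (2 * p + 1) i ↔ i = j := by
      rw [Fin.ext_iff, Fin.val_ofNat, Fin.val_ofNat, Nat.mod_eq_of_lt (by omega),
        Nat.mod_eq_of_lt (by omega), eq_comm]
    change (Pi.single (Fin.ofNat (2 * p + 1) i) (1 : ℂ) : E (2 * p + 1)) (Fin.ofNat _ j) = _
    simp only [Pi.single_apply, this]
  have key := sum_pow_mul_ι_ne_zero e d hde p le_rfl
  have hlast : e (2 * p) = LinearMap.proj (Fin.last (2 * p)) := by
    simp only [e]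
    congr 1
    ext
    simp
  have hΩ : (twoFormEl (2 * p + 1) fun X Y =>
      -(LinearMap.proj (Fin.last (2 * p)) : Module.Dual ℂ (E (2 * p + 1))) (h X Y)) =
      -∑ k ∈ Finset.range p, ExteriorAlgebra.ι ℂ (e (2 * k)) *
        ExteriorAlgebra.ι ℂ (e (2 * k + 1)) := by
    rw [twoFormEl, ← Finset.sum_neg_distrib]
    symm
    have hmod : ∀ k < 2 * p + 1, k % (2 * p + 1) = k := fun k hk => Nat.mod_eq_of_lt hk
    refine Finset.sum_of_injOn (fun k => (Fin.ofNat (2 * p + 1) (2 * k),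
      Fin.ofNat (2 * p + 1) (2 * k + 1))) ?_ ?_ ?_ ?_
    · intro k hk l hl hkl
      have hk : k < p := by simpa using hk
      have hl : l < p := by simpa using hl
      have := congrArg (fun q => (q.1 : ℕ)) hkl
      simp only [Fin.val_ofNat] at this
      rw [hmod _ (by omega), hmod _ (by omega)] at this
      omega
    · intro k hk
      have hk : k < p := by simpa using hk
      simp only [Finset.coe_filter, Finset.mem_univ, true_and, Set.mem_ofPred_eq, Fin.lt_def,
        Fin.val_ofNat]
      rw [hmod _ (by omega), hmod _ (by omega)]
      omega
    · rintro ⟨i, j⟩ hq hn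
      have hij : (i : ℕ) < j := by simpa using hq
      have hj := j.2
      have h1 : ¬ ((i : ℕ) % 2 = 0 ∧ (j : ℕ) = i + 1) := by
        rintro ⟨h1, h2⟩
        refine hn ⟨i / 2, by simp; omega, ?_⟩
        ext
        · simp only [Fin.val_ofNat]
          rw [hmod _ (by omega)]
          omega
        · simp only [Fin.val_ofNat]
          rw [hmod _ (by omega)]
          omega
      have h2 : ¬ ((j : ℕ) % 2 = 0 ∧ (i : ℕ) = j + 1) := by omega
      simp [hh, heisC, h1, h2]
    · intro k hk
      have hk : k < p := by simpa using hk
      have h1 : heisC p (Fin.ofNat (2 * p + 1) (2 * k)) (Fin.ofNat (2 * p + 1) (2 * k + 1)) =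
          Pi.single (Fin.last (2 * p)) 1 := by
        rw [heisC, if_pos]
        simp only [Fin.val_ofNat]
        rw [hmod _ (by omega), hmod _ (by omega)]
        omega
      simp only [hh, h1, e]
      simp
  intro h0
  rw [hΩ, neg_pow, ← hlast] at h0
  apply key
  have hcomm : Commute (∑ k ∈ Finset.range p, ExteriorAlgebra.ι ℂ (e (2 * k)) *
      ExteriorAlgebra.ι ℂ (e (2 * k + 1))) (ExteriorAlgebra.ι ℂ (e (2 * p))) :=
    deg_two_commute_ι (Submodule.sum_mem _ fun k _ => ι_mul_ι_mem _ _) _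
  rw [(hcomm.pow_left p).eq]
  rcases neg_one_pow_eq_or (ExteriorAlgebra ℂ (Module.Dual ℂ (E (2 * p + 1)))) p with hs | hs
  · simpa [hs] using h0
  · simpa [hs] using h0

/-- a `(2p+1)`-dimensional Lie algebra law `μ` admits a contact form iff the
Heisenberg law `h_p` lies in the closure of the orbit of `μ` (i.e. `h_p` is a contraction
of `μ`). -/
theorem stmt8 (p : ℕ) (hp : 1 ≤ p) (μ : Bil (2 * p + 1)) (hμ : μ ∈ LieLaw (2 * p + 1))
    (h : Bil (2 * p + 1))
    (hh : ∀ i j : Fin (2 * p + 1), h (Pi.single i 1) (Pi.single j 1) = heisC p i j) :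
    (∃ ω : Module.Dual ℂ (E (2 * p + 1)), IsContact μ ω p) ↔ h ∈ closure (orbit μ) := by
  constructor
  · rintro ⟨ω, hω⟩
    exact hω.mem_closure hμ.1 hh
  · intro hcl
    obtain ⟨ν, hν, hνorb⟩ :=
      mem_closure_iff.mp hcl _ (isOpen_isContact _ p) (isContact_heis hh)
    exact IsContact.of_orbit hμ.1 hνorb hν
end
end

section
/- Let μ ∈ Lⁿ and 1 ≤ p < n be such that h = span(e₁,…,e_p) is a subalgebra of (ℂⁿ, μ). For ε ≠ 0 let f_ε ∈ GL(n,ℂ) be defined by f_ε(e_i) = (1+ε)e_i for i ≤ p and f_ε(e_l) = ε e_l for l > p. Then the limit μ₀ = lim_{ε→0} f_ε*μ exists in the space of alternating bilinear maps and is given by: μ₀(e_i,e_j) = μ(e_i,e_j) for i,j ≤ p; μ₀(e_i,e_l) = pr(μ(e_i,e_l)) for i ≤ p < l; μ₀(e_l,e_m) = 0 for l,m > p. Consequently μ₀ ∈ Lⁿ lies in the closure of O(μ), h is a subalgebra of (ℂⁿ, μ₀), and a = span(e_{p+1},…,e_n) is an abelian ideal of (ℂⁿ, μ₀), so that (ℂⁿ,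 μ₀) = h ⊕ a. -/
/-!
In the standard basis `f_ε` is diagonal, with weights `c_i = 1 + ε` for `i` among the first `p` indices and
`c_i = ε` for the others. Hence the structure constants of `f_ε*μ` are those of `μ` multiplied by
`c_k⁻¹ c_i c_j` (`conj_coord`). This factor is unbounded as `ε → 0` only when `i`, `j` are low and
`k` is high, and there the structure constant vanishes because the span of the low vectors is a
subalgebra; in all other cases the limit is read off directly (`tendsto_coord`). Since the space of
bilinear maps is finite-dimensional, convergence of structure constants is convergence
(`tendsto_of_coord`).

The set of Lie algebra laws is closed and stable under the action, so the limit is a Lie algebra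
law in the closure of the orbit. The statements on the two subspaces follow from bilinearity
and the values of `μ₀` on basis vectors.
-/

set_option synthInstance.maxHeartbeats 400000
set_option maxHeartbeats 1000000

noncomputable section

open Filter Topology

/-- The span of the first `p` standard basis vectors of `ℂⁿ`. -/
def spanLow (n p : ℕ) : Submodule ℂ (E n) :=
  Submodule.span ℂ {x | ∃ i : Fin n, (i : ℕ) < p ∧ x = Pi.single i 1}

/-- The span of the last `n − p` standard basis vectors of `ℂⁿ`. -/
def spanHigh (n p : ℕ) : Submodule ℂ (E n) :=
  Submodule.span ℂ {x | ∃ i : Fin n, p ≤ (i : ℕ) ∧ x = Pi.single i 1}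

/-- The Inönü–Wigner isomorphism `f_ε`: `f_ε(e_i) = (1+ε)e_i` for `i ≤ p`,
`f_ε(e_l) = ε e_l` for `l > p`. -/
noncomputable def fIW (n p : ℕ) (ε : ℂ) : E n →L[ℂ] E n :=
  LinearMap.toContinuousLinearMap
    (LinearMap.pi fun i : Fin n =>
      (if (i : ℕ) < p then 1 + ε else ε) • LinearMap.proj i)

/-! ### The coordinate subspaces -/

lemma mem_spanLow {n p : ℕ} {x : E n} :
    x ∈ spanLow n p ↔ ∀ k : Fin n, p ≤ (k : ℕ) → x k = 0 := by
  constructor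
  · intro hx k hk
    have hle : spanLow n p ≤ LinearMap.ker (LinearMap.proj k : E n →ₗ[ℂ] ℂ) := by
      refine Submodule.span_le.2 ?_
      rintro _ ⟨i, hi, rfl⟩
      have hne : k ≠ i := by rintro rfl; omega
      simp [hne]
    exact hle hx
  · intro h
    rw [pi_eq_sum_univ' x]
    refine Submodule.sum_mem _ fun i _ => ?_
    by_cases hi : (i : ℕ) < p
    · exact Submodule.smul_mem _ _ (Submodule.subset_span ⟨i, hi, by ext; simp [Pi.single_apply]⟩)
    · simp [h i (not_lt.1 hi)]

lemma mem_spanHigh {n p : ℕ} {x : E n} :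
    x ∈ spanHigh n p ↔ ∀ k : Fin n, (k : ℕ) < p → x k = 0 := by
  constructor
  · intro hx k hk
    have hle : spanHigh n p ≤ LinearMap.ker (LinearMap.proj k : E n →ₗ[ℂ] ℂ) := by
      refine Submodule.span_le.2 ?_
      rintro _ ⟨i, hi, rfl⟩
      have hne : k ≠ i := by rintro rfl; omega
      simp [hne]
    exact hle hx
  · intro h
    rw [pi_eq_sum_univ' x]
    refine Submodule.sum_mem _ fun i _ => ?_
    by_cases hi : (i : ℕ) < p
    · simp [h i hi]
    · exact Submodule.smul_mem _ _
        (Submodule.subset_span ⟨i, not_lt.1 hi, by ext; simp [Pi.single_apply]⟩)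

lemma isCompl_spanLow_spanHigh (n p : ℕ) : IsCompl (spanLow n p) (spanHigh n p) := by
  constructor
  · rw [Submodule.disjoint_def]
    intro x hl hh
    ext k
    rcases lt_or_ge (k : ℕ) p with hk | hk
    · exact mem_spanHigh.1 hh k hk
    · exact mem_spanLow.1 hl k hk
  · rw [codisjoint_iff, eq_top_iff]
    intro x _
    refine Submodule.mem_sup.2 ⟨fun k => if (k : ℕ) < p then x k else 0, mem_spanLow.2 ?_,
      fun k => if (k : ℕ) < p then 0 else x k, mem_spanHigh.2 ?_, ?_⟩
    · intro k hk
      simp [not_lt.2 hk]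
    · intro k hk
      simp [hk]
    · ext k
      by_cases hk : (k : ℕ) < p <;> simp [hk]

/-- A condition of the form `B x y ∈ W` on spans may be checked on generators. -/
lemma bil_mem_of_span {n : ℕ} (B : Bil n) (s t : Set (E n)) (W : Submodule ℂ (E n))
    (h : ∀ x ∈ s, ∀ y ∈ t, B x y ∈ W) :
    ∀ x ∈ Submodule.span ℂ s, ∀ y ∈ Submodule.span ℂ t, B x y ∈ W := by
  intro x hx y hy
  induction hx using Submodule.span_induction with
  | mem x hx =>
    induction hy using Submodule.span_induction with
    | mem y hy => exact h x hx y hy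
    | zero => simp
    | add y z _ _ h₁ h₂ => rw [map_add]; exact W.add_mem h₁ h₂
    | smul a y _ h₁ => rw [map_smul]; exact W.smul_mem a h₁
  | zero => simp
  | add x z _ _ h₁ h₂ => rw [map_add]; exact W.add_mem h₁ h₂
  | smul a x _ h₁ => rw [map_smul]; exact W.smul_mem a h₁

/-! ### Convergence and closedness in the space of bilinear maps -/

/-- The structure constants of a bilinear map, as a linear map. -/
def structConst (n : ℕ) : Bil n →ₗ[ℂ] (Fin n → Fin n → Fin n → ℂ) where
  toFun B i j k := B (Pi.single i 1) (Pi.single j 1) k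
  map_add' _ _ := rfl
  map_smul' _ _ := rfl

lemma ker_structConst (n : ℕ) : LinearMap.ker (structConst n) = ⊥ := by
  rw [LinearMap.ker_eq_bot']
  intro B hB
  have hgen := bil_mem_of_span B {x | ∃ i : Fin n, (i : ℕ) < n ∧ x = Pi.single i 1}
    {x | ∃ i : Fin n, (i : ℕ) < n ∧ x = Pi.single i 1} ⊥ (by
      rintro _ ⟨i, -, rfl⟩ _ ⟨j, -, rfl⟩
      rw [Submodule.mem_bot]
      exact congrFun (congrFun hB i) j)
  ext1 x
  ext1 y
  exact (Submodule.mem_bot ℂ).1 (hgen x (mem_spanLow.2 fun k hk => absurd k.2 (not_lt.2 hk))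
    y (mem_spanLow.2 fun k hk => absurd k.2 (not_lt.2 hk)))

/-- In finite dimension, bilinear maps converge as soon as their structure constants do. -/
lemma tendsto_of_coord {n : ℕ} {ι : Type*} {l : Filter ι} {F : ι → Bil n} {B : Bil n}
    (h : ∀ i j k : Fin n, Tendsto (fun a => F a (Pi.single i 1) (Pi.single j 1) k) l
      (𝓝 (B (Pi.single i 1) (Pi.single j 1) k))) : Tendsto F l (𝓝 B) := by
  have hemb := LinearMap.isClosedEmbedding_of_injective (𝕜 := ℂ) (E := Bil n)
    (F := Fin n → Fin n → Fin n → ℂ) (f := structConst n) (ker_structConst n)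
  rw [hemb.isInducing.tendsto_nhds_iff]
  exact tendsto_pi_nhds.2 fun i => tendsto_pi_nhds.2 fun j => tendsto_pi_nhds.2 fun k => h i j k

lemma isClosed_LieLaw (n : ℕ) : IsClosed (LieLaw n) := by
  have hrw : LieLaw n = (⋂ X : E n, {μ : Bil n | μ X X = 0}) ∩
      ⋂ X : E n, ⋂ Y : E n, ⋂ Z : E n,
        {μ : Bil n | μ X (μ Y Z) + μ Y (μ Z X) + μ Z (μ X Y) = 0} := by
    ext μ
    simp [LieLaw, IsAlt, Jacobi]
  rw [hrw]
  refine (isClosed_iInter fun X => isClosed_eq (by fun_prop) continuous_const).inter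
    (isClosed_iInter fun X => isClosed_iInter fun Y => isClosed_iInter fun Z =>
      isClosed_eq (by fun_prop) continuous_const)

/-! ### The action of the contracting isomorphisms -/

lemma inverse_apply_apply {n : ℕ} {f : E n →L[ℂ] E n} (hf : IsUnit f) (x : E n) :
    Ring.inverse f (f x) = x :=
  congrArg (fun g : E n →L[ℂ] E n => g x) (Ring.inverse_mul_cancel f hf)

lemma apply_inverse_apply {n : ℕ} {f : E n →L[ℂ] E n} (hf : IsUnit f) (x : E n) :
    f (Ring.inverse f x) = x :=
  congrArg (fun g : E n →L[ℂ] E n => g x) (Ring.mul_inverse_cancel f hf)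

lemma conj_mem_LieLaw {n : ℕ} {f : E n →L[ℂ] E n} (hf : IsUnit f) {μ : Bil n}
    (hμ : μ ∈ LieLaw n) : conj f μ ∈ LieLaw n := by
  refine ⟨fun X => ?_, fun X Y Z => ?_⟩
  · rw [conj_apply, hμ.1, map_zero]
  · simp only [conj_apply, apply_inverse_apply hf]
    rw [← map_add, ← map_add, hμ.2, map_zero]

lemma conj_mem_orbit {n : ℕ} {f : E n →L[ℂ] E n} (hf : IsUnit f) (μ : Bil n) :
    conj f μ ∈ orbit μ :=
  ⟨ContinuousLinearEquiv.equivOfInverse f (Ring.inverse f) (inverse_apply_apply hf)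
    (apply_inverse_apply hf), fun _ _ => rfl⟩

lemma fIW_apply (n p : ℕ) (ε : ℂ) (x : E n) (k : Fin n) :
    fIW n p ε x k = (if (k : ℕ) < p then 1 + ε else ε) * x k := rfl

lemma fIW_single (n p : ℕ) (ε : ℂ) (i : Fin n) :
    fIW n p ε (Pi.single i 1) = (if (i : ℕ) < p then 1 + ε else ε) • (Pi.single i 1 : E n) := by
  ext k
  rw [fIW_apply]
  by_cases hk : k = i
  · subst hk; simp
  · simp [hk]

lemma isUnit_fIW (n p : ℕ) {ε : ℂ} (h0 : ε ≠ 0) (h1 : 1 + ε ≠ 0) : IsUnit (fIW n p ε) := by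
  let g : E n →L[ℂ] E n := LinearMap.toContinuousLinearMap
    (LinearMap.pi fun i : Fin n =>
      (if (i : ℕ) < p then 1 + ε else ε)⁻¹ • LinearMap.proj i)
  have hg : ∀ (x : E n) (k : Fin n),
      g x k = (if (k : ℕ) < p then 1 + ε else ε)⁻¹ * x k := fun _ _ => rfl
  have hc : ∀ k : Fin n, (if (k : ℕ) < p then 1 + ε else ε) ≠ 0 := by
    intro k
    split_ifs <;> assumption
  refine ⟨⟨fIW n p ε, g, ?_, ?_⟩, rfl⟩
  · refine ContinuousLinearMap.ext fun x => funext fun k => ?_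
    change fIW n p ε (g x) k = x k
    rw [fIW_apply, hg, mul_inv_cancel_left₀ (hc k)]
  · refine ContinuousLinearMap.ext fun x => funext fun k => ?_
    change g (fIW n p ε x) k = x k
    rw [hg, fIW_apply, inv_mul_cancel_left₀ (hc k)]

/-- The structure constants of `f_ε*μ`. -/
lemma conj_coord (n p : ℕ) {ε : ℂ} (h0 : ε ≠ 0) (h1 : 1 + ε ≠ 0) (μ : Bil n) (i j k : Fin n) :
    conj (fIW n p ε) μ (Pi.single i 1) (Pi.single j 1) k =
      (if (k : ℕ) < p then 1 + ε else ε)⁻¹ * (if (i : ℕ) < p then 1 + ε else ε) *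
        (if (j : ℕ) < p then 1 + ε else ε) * μ (Pi.single i 1) (Pi.single j 1) k := by
  have hc : (if (k : ℕ) < p then 1 + ε else ε) ≠ 0 := by
    split_ifs <;> assumption
  have key := congrFun (apply_inverse_apply (isUnit_fIW n p h0 h1)
    (μ (fIW n p ε (Pi.single i 1)) (fIW n p ε (Pi.single j 1)))) k
  rw [fIW_apply, ← conj_apply, fIW_single, fIW_single] at key
  simp only [map_smul, smul_apply, Pi.smul_apply, smul_eq_mul] at key
  rw [mul_assoc, mul_assoc, eq_inv_mul_iff_mul_eq₀ hc, key]
  ring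

lemma eventually_weights_ne_zero :
    ∀ᶠ ε : ℂ in 𝓝[≠] (0 : ℂ), ε ≠ 0 ∧ 1 + ε ≠ 0 := by
  have hcont : ContinuousAt (fun ε : ℂ => 1 + ε) 0 := by fun_prop
  have hne : ∀ᶠ ε : ℂ in 𝓝 (0 : ℂ), 1 + ε ≠ 0 := hcont.eventually_ne (by simp)
  exact eventually_mem_nhdsWithin.and (hne.filter_mono nhdsWithin_le_nhds)

/-- The limit of one structure constant `m` rescaled by `c_k⁻¹ c_i c_j`, where `P`, `Q`, `R` say
that `i`, `j`, `k` are low. The only divergent case is excluded by `hm`. -/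
lemma tendsto_coord (P Q R : Prop) [Decidable P] [Decidable Q] [Decidable R] (m : ℂ)
    (hm : P → Q → ¬ R → m = 0) :
    Tendsto (fun ε : ℂ => (if R then 1 + ε else ε)⁻¹ * (if P then 1 + ε else ε) *
        (if Q then 1 + ε else ε) * m) (𝓝[≠] (0 : ℂ))
      (𝓝 (if P ∧ Q then m else if (P ∨ Q) ∧ ¬ R then m else 0)) := by
  -- After cancellation the factor is a function of `ε` continuous at `0`.
  have aux : ∀ (g : ℂ → ℂ) (a : ℂ), ContinuousAt g 0 → g 0 = a →
      (∀ ε : ℂ, ε ≠ 0 → 1 + ε ≠ 0 → (if R then 1 + ε else ε)⁻¹ * (if P then 1 + ε else ε) *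
        (if Q then 1 + ε else ε) * m = g ε) →
      Tendsto (fun ε : ℂ => (if R then 1 + ε else ε)⁻¹ * (if P then 1 + ε else ε) *
        (if Q then 1 + ε else ε) * m) (𝓝[≠] (0 : ℂ)) (𝓝 a) := by
    rintro g _ hg rfl heq
    refine (hg.tendsto.mono_left nhdsWithin_le_nhds).congr' ?_
    filter_upwards [eventually_weights_ne_zero] with ε hε
    exact (heq ε hε.1 hε.2).symm
  by_cases hP : P <;> by_cases hQ : Q <;> by_cases hR : R
  · refine aux (fun ε => (1 + ε) * m) _ (by fun_prop) (by simp [hP, hQ]) fun ε h0 h1 => ?_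
    simp only [hP, hQ, hR, if_true]; field_simp
  · simp [hm hP hQ hR]
  · refine aux (fun ε => ε * m) _ (by fun_prop) (by simp [hP, hQ, hR]) fun ε h0 h1 => ?_
    simp only [hP, hQ, hR, if_true, if_false]; field_simp
  · refine aux (fun ε => (1 + ε) * m) _ (by fun_prop) (by simp [hP, hQ, hR]) fun ε h0 h1 => ?_
    simp only [hP, hQ, hR, if_true, if_false]; field_simp
  · refine aux (fun ε => ε * m) _ (by fun_prop) (by simp [hP, hQ, hR]) fun ε h0 h1 => ?_
    simp only [hP, hQ, hR, if_true, if_false]; field_simp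
  · refine aux (fun ε => (1 + ε) * m) _ (by fun_prop) (by simp [hP, hQ, hR]) fun ε h0 h1 => ?_
    simp only [hP, hQ, hR, if_true, if_false]; field_simp
  · refine aux (fun ε => (1 + ε)⁻¹ * ε * ε * m) _ ?_ (by simp [hP, hQ]) fun ε h0 h1 => ?_
    · have hinv : ContinuousAt (fun ε : ℂ => (1 + ε)⁻¹) 0 :=
        ContinuousAt.inv₀ (by fun_prop) (by simp)
      fun_prop
    · simp only [hP, hQ, hR, if_true, if_false]
  · refine aux (fun ε => ε * m) _ (by fun_prop) (by simp [hP, hQ]) fun ε h0 h1 => ?_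
    simp only [hP, hQ, hR, if_false]; field_simp

/-- the Inönü–Wigner contraction of `μ` with respect to the subalgebra
spanned by `e₁,…,e_p`. -/
theorem stmt9 (n p : ℕ) (hp1 : 1 ≤ p) (hpn : p < n) (μ : Bil n) (hμ : μ ∈ LieLaw n)
    (hsub : ∀ X ∈ spanLow n p, ∀ Y ∈ spanLow n p, μ X Y ∈ spanLow n p)
    (μ₀ : Bil n)
    (h1 : ∀ i j : Fin n, (i : ℕ) < p → (j : ℕ) < p →
      μ₀ (Pi.single i 1) (Pi.single j 1) = μ (Pi.single i 1) (Pi.single j 1))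
    (h2 : ∀ i l : Fin n, (i : ℕ) < p → p ≤ (l : ℕ) →
      μ₀ (Pi.single i 1) (Pi.single l 1) =
        fun m : Fin n => if p ≤ (m : ℕ) then μ (Pi.single i 1) (Pi.single l 1) m else 0)
    (h2' : ∀ i l : Fin n, (i : ℕ) < p → p ≤ (l : ℕ) →
      μ₀ (Pi.single l 1) (Pi.single i 1) =
        fun m : Fin n => if p ≤ (m : ℕ) then μ (Pi.single l 1) (Pi.single i 1) m else 0)
    (h3 : ∀ l m : Fin n, p ≤ (l : ℕ) → p ≤ (m : ℕ) →
      μ₀ (Pi.single l 1) (Pi.single m 1) = 0) :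
    (∀ᶠ ε : ℂ in 𝓝[≠] (0 : ℂ), IsUnit (fIW n p ε)) ∧
    Tendsto (fun ε : ℂ => conj (fIW n p ε) μ) (𝓝[≠] (0 : ℂ)) (𝓝 μ₀) ∧
    μ₀ ∈ LieLaw n ∧ μ₀ ∈ closure (orbit μ) ∧
    (∀ X ∈ spanLow n p, ∀ Y ∈ spanLow n p, μ₀ X Y ∈ spanLow n p) ∧
    (∀ X : E n, ∀ Y ∈ spanHigh n p, μ₀ X Y ∈ spanHigh n p) ∧
    (∀ X ∈ spanHigh n p, ∀ Y ∈ spanHigh n p, μ₀ X Y = 0) ∧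
    IsCompl (spanLow n p) (spanHigh n p) := by
  have hunit : ∀ᶠ ε : ℂ in 𝓝[≠] (0 : ℂ), IsUnit (fIW n p ε) :=
    eventually_weights_ne_zero.mono fun ε hε => isUnit_fIW n p hε.1 hε.2
  have hlim : Tendsto (fun ε : ℂ => conj (fIW n p ε) μ) (𝓝[≠] (0 : ℂ)) (𝓝 μ₀) := by
    refine tendsto_of_coord fun i j k => ?_
    have hval : μ₀ (Pi.single i 1) (Pi.single j 1) k =
        if (i : ℕ) < p ∧ (j : ℕ) < p then μ (Pi.single i 1) (Pi.single j 1) k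
        else if ((i : ℕ) < p ∨ (j : ℕ) < p) ∧ ¬ (k : ℕ) < p then
          μ (Pi.single i 1) (Pi.single j 1) k else 0 := by
      by_cases hi : (i : ℕ) < p <;> by_cases hj : (j : ℕ) < p
      · simp [h1 i j hi hj, hi, hj]
      · simp [h2 i j hi (not_lt.1 hj), hi, hj]
      · simp [h2' j i hj (not_lt.1 hi), hi, hj]
      · simp [h3 i j (not_lt.1 hi) (not_lt.1 hj), hi, hj]
    rw [hval]
    refine (tendsto_coord _ _ ((k : ℕ) < p) _ fun hi hj hk => ?_).congr' ?_
    · exact mem_spanLow.1 (hsub _ (Submodule.subset_span ⟨i, hi, rfl⟩)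
        _ (Submodule.subset_span ⟨j, hj, rfl⟩)) k (not_lt.1 hk)
    · filter_upwards [eventually_weights_ne_zero] with ε hε
      exact (conj_coord n p hε.1 hε.2 μ i j k).symm
  refine ⟨hunit, hlim, ?_, ?_, ?_, ?_, ?_, isCompl_spanLow_spanHigh n p⟩
  · exact (isClosed_LieLaw n).mem_of_tendsto hlim
      (hunit.mono fun ε hε => conj_mem_LieLaw hε hμ)
  · exact mem_closure_of_tendsto hlim (hunit.mono fun ε hε => conj_mem_orbit hε μ)
  · refine bil_mem_of_span _ _ _ _ ?_
    rintro _ ⟨i, hi, rfl⟩ _ ⟨j, hj, rfl⟩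
    rw [h1 i j hi hj]
    exact hsub _ (Submodule.subset_span ⟨i, hi, rfl⟩) _ (Submodule.subset_span ⟨j, hj, rfl⟩)
  · intro X Y hY
    -- The whole space is `spanLow n n`.
    have hX : X ∈ spanLow n n := mem_spanLow.2 fun k hk => absurd k.2 (not_lt.2 hk)
    refine bil_mem_of_span μ₀ _ _ (spanHigh n p) ?_ X hX Y hY
    rintro _ ⟨i, -, rfl⟩ _ ⟨j, hj, rfl⟩
    rcases lt_or_ge (i : ℕ) p with hi | hi
    · rw [h2 i j hi hj]
      exact mem_spanHigh.2 fun k hk => if_neg (not_le.2 hk)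
    · rw [h3 i j hi hj]
      exact Submodule.zero_mem _
  · intro X hX Y hY
    refine (Submodule.mem_bot ℂ).1 (bil_mem_of_span μ₀ _ _ ⊥ ?_ X hX Y hY)
    rintro _ ⟨i, hi, rfl⟩ _ ⟨j, hj, rfl⟩
    rw [h3 i j hi hj]
    exact Submodule.zero_mem _
end
end

section
/- Let μ₀ ∈ Lⁿ, let φ be a nonzero alternating bilinear map ℂⁿ × ℂⁿ → ℂⁿ, and let S(t) = Σ_{i≥1} sᵢtⁱ be a complex power series, not identically zero, with radius of convergence r > 0. If μ₀ + S(t)φ ∈ Lⁿ for every t ∈ ℂ with |t| < r, then δ_{μ₀}φ = 0 and φ∘φ = 0. -/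
/-!
For a scalar `c`, bilinearity gives `(μ₀ + cφ)∘(μ₀ + cφ) = μ₀∘μ₀ + c δφ + c² φ∘φ`, where `μ₀∘μ₀ = 0`.
Hence `δφ + c φ∘φ = 0` for every nonzero value `c` of `S` (`circ_expand`). Since `S` is analytic
at `0`, vanishes there and is not locally zero, it takes two distinct nonzero values
(`exists_two_values`); subtracting the two equations gives `φ∘φ = 0`, and then `δφ = 0`.
-/

set_option synthInstance.maxHeartbeats 400000
set_option maxHeartbeats 1000000

noncomputable section

/-- A convergent power series without constant term that is not formally zero takes two distinct
nonzero values on its disc: it tends to `0` at `0`, and its zeros are isolated. -/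
lemma exists_two_values (s : ℕ → ℂ) (hs0 : s 0 = 0) (hsne : ∃ i, s i ≠ 0)
    (r : ℝ) (hr : 0 < r) (hconv : ∀ t : ℂ, ‖t‖ < r → Summable fun i => s i * t ^ i) :
    ∃ t u : ℂ, ‖t‖ < r ∧ ‖u‖ < r ∧ (∑' i, s i * t ^ i) ≠ 0 ∧ (∑' i, s i * u ^ i) ≠ 0 ∧
      (∑' i, s i * t ^ i) ≠ ∑' i, s i * u ^ i := by
  set S : ℂ → ℂ := fun t => ∑' i, s i * t ^ i with hS
  let p := FormalMultilinearSeries.ofScalars ℂ s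
  -- The terms at `r / 2` tend to `0`, which bounds the radius of convergence from below.
  have hrad : ENNReal.ofReal (r / 2) ≤ p.radius := by
    have hlt : ‖((r / 2 : ℝ) : ℂ)‖ < r := by
      rw [Complex.norm_real, Real.norm_of_nonneg (by positivity)]; linarith
    have h0 := (hconv _ hlt).tendsto_atTop_zero.norm
    refine p.le_radius_of_tendsto (r := (r / 2).toNNReal) (l := ‖(0 : ℂ)‖) ?_
    refine h0.congr fun i => ?_
    rw [norm_mul, norm_pow, Complex.norm_real, Real.norm_of_nonneg (by positivity),
      Real.coe_toNNReal _ (by positivity), FormalMultilinearSeries.ofScalars_norm]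
  have hpos : 0 < p.radius := lt_of_lt_of_le (by simpa using hr) hrad
  have hsum : p.sum = S := by
    funext t
    simp [p, hS, FormalMultilinearSeries.sum, mul_comm]
  have hps : HasFPowerSeriesAt S p 0 := hsum ▸ (p.hasFPowerSeriesOnBall hpos).hasFPowerSeriesAt
  have hS0 : S 0 = 0 := by
    simp only [hS]
    rw [tsum_eq_single 0 (fun i hi => by simp [hi])]
    simp [hs0]
  have hne : ∀ᶠ z in nhdsWithin (0 : ℂ) {0}ᶜ, S z ≠ 0 := by
    refine hps.analyticAt.eventually_eq_zero_or_eventually_ne_zero.resolve_left fun h => ?_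
    have hp0 : p = 0 := HasFPowerSeriesAt.eq_zero (hps.congr h)
    obtain ⟨i, hi⟩ := hsne
    have := FormalMultilinearSeries.coeff_ofScalars (𝕜 := ℂ) (p := s) (n := i)
    rw [show FormalMultilinearSeries.ofScalars ℂ s = 0 from hp0] at this
    exact hi (by simpa [FormalMultilinearSeries.coeff] using this.symm)
  have hball : ∀ᶠ z in nhdsWithin (0 : ℂ) {0}ᶜ, ‖z‖ < r :=
    nhdsWithin_le_nhds ((continuous_norm.tendsto (0 : ℂ)).eventually_lt_const (by simpa using hr))
  obtain ⟨t, ht, htr⟩ := (hne.and hball).exists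
  have hsmall : ∀ᶠ z in nhdsWithin (0 : ℂ) {0}ᶜ, S z ≠ S t := by
    refine nhdsWithin_le_nhds (hps.continuousAt.eventually_ne ?_)
    rw [hS0]
    exact ht.symm
  obtain ⟨u, ⟨hu, hur⟩, hut⟩ := ((hne.and hball).and hsmall).exists
  exact ⟨t, u, htr, hur, ht, hu, hut.symm⟩

lemma IsAlt.swap {n : ℕ} {μ : Bil n} (h : IsAlt μ) (X Y : E n) : μ X Y = -μ Y X := by
  have := h (X + Y)
  simp only [map_add, add_apply, h X, h Y, zero_add, add_zero] at this
  exact eq_neg_of_add_eq_zero_left (by rw [add_comm]; exact this)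

/-- For an alternating map the Jacobi identity says `μ∘μ = 0`. -/
lemma circ_self_of_lieLaw {n : ℕ} {μ : Bil n} (h : μ ∈ LieLaw n) (X Y Z : E n) :
    circ μ μ X Y Z = 0 := by
  have hJ := h.2 X Y Z
  rw [h.1.swap X, h.1.swap Y (μ Z X), h.1.swap Z (μ X Y)] at hJ
  rw [← neg_eq_zero, ← hJ, circ]
  abel

/-- `(μ + c φ)∘(μ + c φ) = 0` divided by `c`. -/
lemma circ_expand {n : ℕ} {μ φ : Bil n} {c : ℂ} (hc : c ≠ 0) (h0 : μ ∈ LieLaw n)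
    (h : μ + c • φ ∈ LieLaw n) (X Y Z : E n) :
    (circ μ φ X Y Z + circ φ μ X Y Z) + c • circ φ φ X Y Z = 0 := by
  have h1 := circ_self_of_lieLaw h X Y Z
  have h2 := circ_self_of_lieLaw h0 X Y Z
  refine (smul_eq_zero.mp ?_).resolve_left hc
  refine Eq.trans (b := circ (μ + c • φ) (μ + c • φ) X Y Z - circ μ μ X Y Z) ?_
    (by rw [h1, h2, sub_zero])
  simp only [circ, add_apply, smul_apply, map_add,
    map_smul]
  module

/-- if `μ₀ + S(t)φ ∈ Lⁿ` for all `|t| < r`, where `S(t) = Σ_{i≥1} sᵢtⁱ` is a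
nonzero power series with radius of convergence `r > 0` and `φ ≠ 0` is alternating, then
`δ_{μ₀}φ = 0` and `φ∘φ = 0`. -/
theorem stmt14 (n : ℕ) (μ₀ : Bil n) (hμ : μ₀ ∈ LieLaw n) (φ : Bil n)
    (halt : IsAlt φ) (hφ0 : φ ≠ 0) (s : ℕ → ℂ) (hs0 : s 0 = 0) (hsne : ∃ i, s i ≠ 0)
    (r : ℝ) (hr : 0 < r) (hconv : ∀ t : ℂ, ‖t‖ < r → Summable fun i => s i * t ^ i)
    (hlaw : ∀ t : ℂ, ‖t‖ < r → μ₀ + (∑' i, s i * t ^ i) • φ ∈ LieLaw n) :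
    (∀ X Y Z, circ μ₀ φ X Y Z + circ φ μ₀ X Y Z = 0) ∧
      (∀ X Y Z, circ φ φ X Y Z = 0) := by
  obtain ⟨t, u, ht, hu, ht0, hu0, htu⟩ := exists_two_values s hs0 hsne r hr hconv
  have key : ∀ X Y Z, circ φ φ X Y Z = 0 := fun X Y Z => by
    have h1 := circ_expand ht0 hμ (hlaw t ht) X Y Z
    have h2 := circ_expand hu0 hμ (hlaw u hu) X Y Z
    refine (smul_eq_zero.mp ?_).resolve_left (sub_ne_zero.mpr htu)
    rw [sub_smul, sub_eq_zero]
    exact add_left_cancel (h1.trans h2.symm)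
  refine ⟨fun X Y Z => ?_, key⟩
  simpa [key X Y Z] using circ_expand ht0 hμ (hlaw t ht) X Y Z
end
end

section
/- Let K be a field and A a K-algebra which is a valuation ring with maximal ideal m, whose residue field equals K via the composite K → A → A/m. For every pair (a₁, a₂) ∈ m × m with a₁ ≠ 0 and a₂ ≠ 0, there exist linearly independent vectors V₁, V₂ in the K-vector space K² and elements a, b ∈ m such that (a₁, a₂) = a·V₁ + a·b·V₂ in A² (K² being regarded inside A² via the structure map). -/
/-!
In a valuation ring one of `a₁, a₂` divides the other, say `a₂ = a₁ * c`. As `K` maps onto the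
residue field, `c = k + b` with `k ∈ K` and `b ∈ m`, so
`(a₁, a₂) = a₁ • (1, k) + a₁ * b • (0, 1)`. The other case is the same with coordinates swapped.
-/

/-- Splitting off the residue: every element is a constant plus an element of `m`. -/
theorem exists_eq_algebraMap_add (K : Type*) [Field K] (A : Type*) [CommRing A] [IsLocalRing A]
    [Algebra K A]
    (hres : Function.Surjective
      ((IsLocalRing.residue A).comp (algebraMap K A) : K →+* IsLocalRing.ResidueField A))
    (c : A) : ∃ (k : K) (b : A), b ∈ IsLocalRing.maximalIdeal A ∧ c = algebraMap K A k + b := by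
  obtain ⟨k, hk⟩ := hres (IsLocalRing.residue A c)
  refine ⟨k, c - algebraMap K A k, ?_, by ring⟩
  rw [← IsLocalRing.residue_eq_zero_iff, map_sub, sub_eq_zero]
  exact hk.symm

/-- in a valuation ring `A` which is a `K`-algebra whose residue field is
`K` itself (via `K → A → A/m`), every pair `(a₁, a₂) ∈ m × m` of nonzero elements can be
written `(a₁, a₂) = a·V₁ + a·b·V₂` with `a, b ∈ m` and `V₁, V₂` linearly independent
vectors of `K²` (regarded inside `A²` via the structure map). -/
theorem stmt15 (K : Type*) [Field K] (A : Type*) [CommRing A] [IsDomain A]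
    [ValuationRing A] [Algebra K A]
    (hres : Function.Bijective
      ((IsLocalRing.residue A).comp (algebraMap K A) : K →+* IsLocalRing.ResidueField A))
    (a₁ a₂ : A) (h₁ : a₁ ∈ IsLocalRing.maximalIdeal A) (h₂ : a₂ ∈ IsLocalRing.maximalIdeal A)
    (h₁0 : a₁ ≠ 0) (h₂0 : a₂ ≠ 0) :
    ∃ (V₁ V₂ : Fin 2 → K) (a b : A),
      LinearIndependent K ![V₁, V₂] ∧
      a ∈ IsLocalRing.maximalIdeal A ∧ b ∈ IsLocalRing.maximalIdeal A ∧
      ∀ i : Fin 2, ![a₁, a₂] i =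
        a * algebraMap K A (V₁ i) + a * b * algebraMap K A (V₂ i) := by
  obtain ⟨c, hc⟩ := ValuationRing.cond a₁ a₂
  obtain ⟨k, b, hb, rfl⟩ := exists_eq_algebraMap_add K A hres.surjective c
  rcases hc with rfl | rfl
  · refine ⟨![1, k], ![0, 1], a₁, b, ?_, h₁, hb, ?_⟩
    · rw [LinearIndependent.pair_iff]
      intro s t h
      have e0 := congrFun h 0
      have e1 := congrFun h 1
      simp at e0 e1
      simp_all
    · intro i
      fin_cases i <;> simp
      ring
  · refine ⟨![k, 1], ![1, 0], a₂, b, ?_, h₂, hb, ?_⟩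
    · rw [LinearIndependent.pair_iff]
      intro s t h
      have e0 := congrFun h 0
      have e1 := congrFun h 1
      simp at e0 e1
      simp_all
    · intro i
      fin_cases i <;> simp
      ring
end

section
/- Let K be a field and A a K-algebra which is a valuation ring with maximal ideal m, whose residue field equals K via the composite K → A → A/m. For every nonzero (a₁,…,a_k) ∈ mᵏ there exist an integer h with 1 ≤ h ≤ k, linearly independent vectors V₁,…,V_h in the K-vector space Kᵏ, and elements b₁,…,b_h ∈ m such that (a₁,…,a_k) = b₁·V₁ + b₁b₂·V₂ + ⋯ + b₁b₂⋯b_h·V_h in Aᵏ. -/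
/-!
A valuation ring has total divisibility, so some coordinate `a i₀` of a nonzero vector `a` divides
all the others. Put `b₁ = a i₀` and `a = b₁ u`, so `u i₀ = 1`. Let `V₁` be the vector over `K` with
the same residues as `u`; then `V₁ i₀ = 1`, and `u - V₁` has entries in the maximal ideal and
vanishes at `i₀`. Recursing on `u - V₁` gives `b₂, …` and `V₂, …`. The recursion tracks the
support: every later `Vⱼ` vanishes at `i₀`, so `V₁` is not in their span, which gives linear
independence, and the support shrinks strictly, which gives termination (`exists_flag_expansion`).
-/

theorem prod_Iic_succ_cons {A : Type*} [CommRing A] {h : ℕ} (c : A) (b : Fin h → A) (j : Fin h) :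
    ∏ l ∈ Finset.Iic j.succ, (Fin.cons c b : Fin (h + 1) → A) l
      = c * ∏ l ∈ Finset.Iic j, b l := by
  have key : ∀ {n : ℕ} (f : Fin n → A) (i : Fin n),
      ∏ l ∈ Finset.Iic i, f l = ∏ l, if l ≤ i then f l else 1 := by
    intro n f i
    rw [← Finset.prod_filter]
    congr 1
    ext l
    simp
  rw [key, key, Fin.prod_univ_succ]
  simp

theorem prod_Iic_zero_cons {A : Type*} [CommRing A] {h : ℕ} (c : A) (b : Fin h → A) :
    ∏ l ∈ Finset.Iic (0 : Fin (h + 1)), (Fin.cons c b : Fin (h + 1) → A) l = c := by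
  have : Finset.Iic (0 : Fin (h + 1)) = {0} := by
    ext l
    simp
  rw [this]
  simp

/-- The expansion with control of supports: if `a` vanishes off `s`, so do all the `V j`.
The zero vector is allowed and corresponds to `h = 0`. -/
theorem exists_flag_expansion (K : Type*) [Field K] (A : Type*) [CommRing A] [IsDomain A]
    [ValuationRing A] [Algebra K A]
    (hres : Function.Bijective
      ((IsLocalRing.residue A).comp (algebraMap K A) : K →+* IsLocalRing.ResidueField A))
    (k : ℕ) (s : Finset (Fin k)) :
    ∀ a : Fin k → A, (∀ i, a i ∈ IsLocalRing.maximalIdeal A) → (∀ i, i ∉ s → a i = 0) →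
    ∃ (h : ℕ) (V : Fin h → Fin k → K) (b : Fin h → A),
      LinearIndependent K V ∧
      (∀ j, b j ∈ IsLocalRing.maximalIdeal A) ∧
      (∀ j i, i ∉ s → V j i = 0) ∧
      ∀ i : Fin k, a i = ∑ j : Fin h, (∏ l ∈ Finset.Iic j, b l) * algebraMap K A (V j i) := by
  induction s using Finset.strongInduction with
  | H s ih =>
  intro a hmem hs
  by_cases ha : a = 0
  · subst ha
    exact ⟨0, Fin.elim0, Fin.elim0, linearIndependent_empty_type, fun j => j.elim0,
      fun j => j.elim0, fun i => by simp⟩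
  obtain ⟨i₁, hi₁⟩ := Function.ne_iff.mp ha
  have : Nonempty (Fin k) := ⟨i₁⟩
  obtain ⟨i₀, hi₀⟩ : ∃ z, ∀ i, a z ∣ a i := by
    have : IsTrans A (fun x y => y ∣ x) := ⟨fun _ _ _ h₁ h₂ => h₂.trans h₁⟩
    suffices D : Directed (fun x y : A => y ∣ x) a by
      obtain ⟨z, hz⟩ := D.finite_le (fun i : Fin k => i)
      exact ⟨z, hz⟩
    intro i j
    rcases ValuationRing.dvd_total (a i) (a j) with h | h
    · exact ⟨i, dvd_rfl, h⟩
    · exact ⟨j, h, dvd_rfl⟩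
  have hne : a i₀ ≠ 0 := by
    intro h0
    apply hi₁
    have := hi₀ i₁
    rw [h0, zero_dvd_iff] at this
    simpa using this
  have hi₀s : i₀ ∈ s := by
    by_contra h
    exact hne (hs _ h)
  choose u hu using hi₀
  have hu0 : u i₀ = 1 := by
    have := hu i₀
    exact mul_left_cancel₀ hne (by rw [← this, mul_one])
  choose v hv using fun i => hres.2 (IsLocalRing.residue A (u i))
  have hv0 : v i₀ = 1 := by
    apply hres.1
    rw [hv, hu0, map_one, map_one]
  have hvs : ∀ i, i ∉ s → u i = 0 ∧ v i = 0 := by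
    intro i hi
    have h1 : u i = 0 := by
      have := hu i
      rw [hs i hi] at this
      exact (mul_eq_zero.mp this.symm).resolve_left hne
    refine ⟨h1, hres.1 ?_⟩
    rw [hv, h1, map_zero, map_zero]
  obtain ⟨h, V, b, hV, hb, hVs, hsum⟩ := ih (s.erase i₀) (Finset.erase_ssubset hi₀s)
    (fun i => u i - algebraMap K A (v i))
    (by
      intro i
      rw [← IsLocalRing.residue_eq_zero_iff, map_sub, sub_eq_zero]
      exact (hv i).symm)
    (by
      intro i hi
      by_cases h : i = i₀
      · subst h
        simp [hu0, hv0]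
      · have his : i ∉ s := fun h' => hi (Finset.mem_erase.mpr ⟨h, h'⟩)
        simp [hvs i his])
  refine ⟨h + 1, Fin.cons v V, Fin.cons (a i₀) b, ?_, ?_, ?_, ?_⟩
  · refine linearIndependent_finCons.mpr ⟨hV, fun hmemspan => ?_⟩
    -- the span of the later vectors lies in the kernel of the `i₀`-th coordinate
    have hle : Submodule.span K (Set.range V)
        ≤ LinearMap.ker (LinearMap.proj i₀ : (Fin k → K) →ₗ[K] K) := by
      rw [Submodule.span_le]
      rintro _ ⟨j, rfl⟩
      exact hVs j i₀ (Finset.notMem_erase _ _)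
    have h0 : v i₀ = 0 := hle hmemspan
    exact one_ne_zero (hv0.symm.trans h0)
  · intro j
    refine Fin.cases ?_ (fun j => ?_) j
    · exact hmem i₀
    · exact hb j
  · intro j i hi
    refine Fin.cases ?_ (fun j => ?_) j
    · exact (hvs i hi).2
    · exact hVs j i (fun h' => hi (Finset.mem_of_mem_erase h'))
  · intro i
    rw [Fin.sum_univ_succ, prod_Iic_zero_cons]
    simp only [prod_Iic_succ_cons, Fin.cons_zero, Fin.cons_succ, mul_assoc]
    rw [← Finset.mul_sum, ← hsum i, ← mul_add, add_sub_cancel]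
    exact hu i

/-- in a valuation ring `A` which is a `K`-algebra whose residue field is
`K` itself (via `K → A → A/m`), every nonzero vector `(a₁,…,a_k) ∈ mᵏ` can be written
`b₁·V₁ + b₁b₂·V₂ + ⋯ + b₁b₂⋯b_h·V_h` with `1 ≤ h ≤ k`, the `bᵢ ∈ m`, and `V₁,…,V_h`
linearly independent vectors of `Kᵏ` (regarded inside `Aᵏ` via the structure map). -/
theorem stmt16 (K : Type*) [Field K] (A : Type*) [CommRing A] [IsDomain A]
    [ValuationRing A] [Algebra K A]
    (hres : Function.Bijective
      ((IsLocalRing.residue A).comp (algebraMap K A) : K →+* IsLocalRing.ResidueField A))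
    (k : ℕ) (a : Fin k → A) (hmem : ∀ i, a i ∈ IsLocalRing.maximalIdeal A) (ha : a ≠ 0) :
    ∃ (h : ℕ) (hh : 1 ≤ h ∧ h ≤ k) (V : Fin h → Fin k → K) (b : Fin h → A),
      LinearIndependent K V ∧
      (∀ j, b j ∈ IsLocalRing.maximalIdeal A) ∧
      ∀ i : Fin k, a i = ∑ j : Fin h, (∏ l ∈ Finset.Iic j, b l) * algebraMap K A (V j i) := by
  obtain ⟨h, V, b, hV, hb, -, hsum⟩ :=
    exists_flag_expansion K A hres k Finset.univ a hmem (fun i hi => absurd (Finset.mem_univ i) hi)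
  refine ⟨h, ⟨?_, ?_⟩, V, b, hV, hb, hsum⟩
  · rw [Nat.one_le_iff_ne_zero]
    rintro rfl
    exact ha (funext fun i => by simpa using hsum i)
  · simpa using hV.fintype_card_le_finrank
end

section
/- Let K be a field and A a K-algebra which is a valuation ring with maximal ideal m, whose residue field equals K via the composite K → A → A/m. Suppose a vector of mᵏ admits two decompositions b₁V₁ + b₁b₂V₂ + ⋯ + b₁b₂⋯b_hV_h = c₁W₁ + c₁c₂W₂ + ⋯ + c₁c₂⋯c_sW_s, where b₁,…,b_h, c₁,…,c_s ∈ m are all nonzero and (V₁,…,V_h), (W₁,…,W_s) are linearly independent families in the K-vector space Kᵏ. Then h = s and the two flags coincide: span_K{V₁,…,Vᵢ} = span_K{W₁,…,Wᵢ} for every i = 1,…,h. -/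
/-!
Let `x` be the vector with the two decompositions, and put `βⱼ = b₁⋯bⱼ`. A linear functional `φ`
on `Kᵏ` extends to `Aᵏ`, and `φ(x) = Σⱼ βⱼ φ(Vⱼ)`. Since `βₗ ∈ m βⱼ` for `l > j`, the first index
`j` with `φ(Vⱼ) ≠ 0` dominates, so `φ(x)` generates the ideal `(βⱼ)`; and `φ(x) = 0` if `φ` kills
every `Vⱼ`. This recovers both the ideals and the flag from `x` alone:

* the nonzero ideals of the form `(φ(x))` are exactly the `(βⱼ)`, since independence of the `Vⱼ`
  provides dual functionals (`range_span_prefixProd`). They form a strictly decreasing chain, so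
  equality of ranges forces `h = s` and `(βⱼ) = (γⱼ)` for all `j`, where `γⱼ = c₁⋯cⱼ`;
* `φ` annihilates `V₁, …, Vᵢ` if and only if `(φ(x)) < (βᵢ)` (`forall_apply_eq_zero_iff`). Hence
  the two spans have the same annihilator, and so they are equal.
-/

open IsLocalRing Module

namespace FlagUniqueness

variable {K : Type*} [Field K] {A : Type*} [CommRing A] [Algebra K A]

/-- The extension of scalars of a functional `φ` on `Kᵏ` to `Aᵏ`, evaluated at `x`. -/
def evalAt {k : ℕ} (x : Fin k → A) (φ : Dual K (Fin k → K)) : A :=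
  ∑ i, algebraMap K A (φ (Pi.single i 1)) * x i

/-- The partial product `b₁⋯bⱼ`. -/
def prefixProd {h : ℕ} (b : Fin h → A) (j : Fin h) : A := ∏ l ∈ Finset.Iic j, b l

lemma evalAt_eq {k h : ℕ} (x : Fin k → A) (V : Fin h → Fin k → K) (b : Fin h → A)
    (hx : ∀ i, x i = ∑ j, prefixProd b j * algebraMap K A (V j i)) (φ : Dual K (Fin k → K)) :
    evalAt x φ = ∑ j, prefixProd b j * algebraMap K A (φ (V j)) := by
  have hφ : ∀ v : Fin k → K, φ v = ∑ i, v i * φ (Pi.single i 1) := fun v => by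
    rw [φ.pi_apply_eq_sum_univ v]
    refine Finset.sum_congr rfl fun i _ => ?_
    rw [smul_eq_mul]
    congr 2
    ext j
    simp [Pi.single_apply, eq_comm]
  unfold evalAt
  simp_rw [hx, Finset.mul_sum]
  rw [Finset.sum_comm]
  refine Finset.sum_congr rfl fun j _ => ?_
  rw [hφ (V j), map_sum, Finset.mul_sum]
  refine Finset.sum_congr rfl fun i _ => ?_
  rw [map_mul]
  ring

variable [IsLocalRing A]

lemma exists_prefixProd_eq_mul {h : ℕ} {b : Fin h → A} (hb : ∀ j, b j ∈ maximalIdeal A)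
    {j l : Fin h} (hjl : j < l) :
    ∃ r ∈ maximalIdeal A, prefixProd b l = prefixProd b j * r := by
  refine ⟨∏ i ∈ Finset.Ioc j l, b i, ?_, ?_⟩
  · exact Ideal.prod_mem _ (Finset.mem_Ioc.2 ⟨hjl, le_rfl⟩) (hb l)
  · have hdisj : Disjoint (Finset.Iic j) (Finset.Ioc j l) := by
      rw [Finset.disjoint_left]
      intro a ha ha'
      simp only [Finset.mem_Iic, Finset.mem_Ioc] at ha ha'
      exact absurd ha (not_le.2 ha'.1)
    unfold prefixProd
    rw [← Finset.prod_union hdisj]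
    congr 1
    ext a
    simp only [Finset.mem_Iic, Finset.mem_union, Finset.mem_Ioc]
    constructor
    · intro ha
      rcases le_or_gt a j with h' | h'
      · exact Or.inl h'
      · exact Or.inr ⟨h', ha⟩
    · rintro (ha | ha)
      · exact ha.trans hjl.le
      · exact ha.2

/-- The first index with a nonzero coefficient dominates the sum: it is `βⱼ` times a unit. -/
lemma span_sum_eq {h : ℕ} {b : Fin h → A} (hb : ∀ j, b j ∈ maximalIdeal A)
    (a : Fin h → K) (j : Fin h) (hj : a j ≠ 0) (hlt : ∀ l < j, a l = 0) :
    Ideal.span {∑ l, prefixProd b l * algebraMap K A (a l)} = Ideal.span {prefixProd b j} := by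
  have key : ∀ l, ∃ t : A, prefixProd b l * algebraMap K A (a l) = prefixProd b j * t ∧
      (l = j → t = algebraMap K A (a j)) ∧ (l ≠ j → t ∈ maximalIdeal A) := by
    intro l
    rcases lt_trichotomy l j with hl | rfl | hl
    · exact ⟨0, by simp [hlt l hl], fun h' => absurd h' hl.ne, fun _ => zero_mem _⟩
    · exact ⟨_, rfl, fun _ => rfl, fun h' => absurd rfl h'⟩
    · obtain ⟨r, hr, hr'⟩ := exists_prefixProd_eq_mul hb hl
      exact ⟨r * algebraMap K A (a l), by rw [hr', mul_assoc], fun h' => absurd h' hl.ne',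
        fun _ => Ideal.mul_mem_right _ _ hr⟩
  choose t ht htj htm using key
  simp_rw [ht]
  rw [← Finset.mul_sum]
  refine Ideal.span_singleton_mul_right_unit ?_ _
  rw [← Finset.add_sum_erase _ _ (Finset.mem_univ j), htj j rfl]
  have hu : IsUnit (algebraMap K A (a j)) := (IsUnit.mk0 _ hj).map _
  have hm : ∑ l ∈ Finset.univ.erase j, t l ∈ maximalIdeal A :=
    sum_mem fun l hl => htm l (Finset.ne_of_mem_erase hl)
  by_contra hn
  exact (mem_maximalIdeal _).1 (((Ideal.add_mem_iff_left _ hm).1 ((mem_maximalIdeal _).2 hn))) hu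

/-- Either `φ` kills all `Vⱼ`, or its first nonvanishing index `j` determines `(φ(x))`. -/
lemma evalAt_cases {k h : ℕ} {x : Fin k → A} {V : Fin h → Fin k → K} {b : Fin h → A}
    (hb : ∀ j, b j ∈ maximalIdeal A)
    (hx : ∀ i, x i = ∑ j, prefixProd b j * algebraMap K A (V j i)) (φ : Dual K (Fin k → K)) :
    ((∀ j, φ (V j) = 0) ∧ evalAt x φ = 0) ∨
      ∃ j, φ (V j) ≠ 0 ∧ (∀ l < j, φ (V l) = 0) ∧
        Ideal.span {evalAt x φ} = Ideal.span {prefixProd b j} := by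
  by_cases hall : ∀ j, φ (V j) = 0
  · exact Or.inl ⟨hall, by rw [evalAt_eq x V b hx]; simp [hall]⟩
  · push Not at hall
    right
    obtain ⟨j, hj, hmin⟩ := WellFounded.has_min (wellFounded_lt (α := Fin h))
      {j | φ (V j) ≠ 0} hall
    have hlt : ∀ l < j, φ (V l) = 0 := fun l hl => by
      by_contra hne
      exact hmin l hne hl
    refine ⟨j, hj, hlt, ?_⟩
    rw [evalAt_eq x V b hx]
    exact span_sum_eq hb (fun l => φ (V l)) j hj hlt

variable [IsDomain A]

lemma prefixProd_ne_zero {h : ℕ} {b : Fin h → A} (hb0 : ∀ j, b j ≠ 0) (j : Fin h) :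
    prefixProd b j ≠ 0 :=
  Finset.prod_ne_zero_iff.2 fun l _ => hb0 l

lemma strictAnti_span {h : ℕ} {b : Fin h → A} (hb : ∀ j, b j ∈ maximalIdeal A)
    (hb0 : ∀ j, b j ≠ 0) : StrictAnti fun j => Ideal.span {prefixProd b j} := by
  intro j l hjl
  obtain ⟨r, hr, hr'⟩ := exists_prefixProd_eq_mul hb hjl
  rw [Ideal.span_singleton_lt_span_singleton]
  exact ⟨prefixProd_ne_zero hb0 j, r, (mem_maximalIdeal _).1 hr, hr'⟩

section

variable {k h : ℕ} {x : Fin k → A} {V : Fin h → Fin k → K} {b : Fin h → A}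

lemma range_span_prefixProd (hb : ∀ j, b j ∈ maximalIdeal A) (hb0 : ∀ j, b j ≠ 0)
    (hV : LinearIndependent K V)
    (hx : ∀ i, x i = ∑ j, prefixProd b j * algebraMap K A (V j i)) :
    (Set.range fun j => Ideal.span {prefixProd b j}) =
      {I | I ≠ ⊥ ∧ ∃ φ : Dual K (Fin k → K), I = Ideal.span {evalAt x φ}} := by
  ext I
  constructor
  · rintro ⟨j, rfl⟩
    refine ⟨by simpa using prefixProd_ne_zero hb0 j, ?_⟩
    -- A left inverse of the injection `Kʰ → Kᵏ` given by `V` yields the dual functional of `Vⱼ`.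
    obtain ⟨g, hg⟩ := LinearMap.exists_leftInverse_of_injective
      (Finsupp.linearCombination K V) (LinearMap.ker_eq_bot.2 hV)
    have hgV : ∀ l, g (V l) = Finsupp.single l 1 := fun l => by
      simpa using LinearMap.congr_fun hg (Finsupp.single l 1)
    refine ⟨(Finsupp.lapply j).comp g, ?_⟩
    rw [evalAt_eq x V b hx]
    refine (span_sum_eq hb (fun l => ((Finsupp.lapply j).comp g) (V l)) j ?_ ?_).symm
    · simp [hgV]
    · intro l hl
      simp [hgV, hl.ne]
  · rintro ⟨hne, φ, rfl⟩
    rcases evalAt_cases hb hx φ with ⟨-, h0⟩ | ⟨j, -, -, hj⟩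
    · exact absurd (by simp [h0]) hne
    · exact ⟨j, hj.symm⟩

lemma forall_apply_eq_zero_iff (hb : ∀ j, b j ∈ maximalIdeal A) (hb0 : ∀ j, b j ≠ 0)
    (hx : ∀ i, x i = ∑ j, prefixProd b j * algebraMap K A (V j i)) (φ : Dual K (Fin k → K))
    (i : Fin h) :
    (∀ j ≤ i, φ (V j) = 0) ↔ Ideal.span {evalAt x φ} < Ideal.span {prefixProd b i} := by
  rcases evalAt_cases hb hx φ with ⟨hall, h0⟩ | ⟨j, hj, hlt, hspan⟩
  · have hi : (⊥ : Ideal A) < Ideal.span {prefixProd b i} :=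
      bot_lt_iff_ne_bot.2 (by simpa using prefixProd_ne_zero hb0 i)
    simpa [hall, h0] using hi
  · rw [hspan, (strictAnti_span hb hb0).lt_iff_gt]
    constructor
    · intro hall
      by_contra hn
      exact hj (hall j (not_lt.1 hn))
    · exact fun hij l hl => hlt l (hl.trans_lt hij)

lemma mem_dualAnnihilator_span_iff (φ : Dual K (Fin k → K)) (i : Fin h) :
    φ ∈ (Submodule.span K (V '' {j : Fin h | (j : ℕ) ≤ (i : ℕ)})).dualAnnihilator ↔
      ∀ j ≤ i, φ (V j) = 0 := by
  have hker : φ ∈ (Submodule.span K (V '' {j : Fin h | (j : ℕ) ≤ (i : ℕ)})).dualAnnihilator ↔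
      Submodule.span K (V '' {j : Fin h | (j : ℕ) ≤ (i : ℕ)}) ≤ LinearMap.ker φ := by
    rw [Submodule.mem_dualAnnihilator]
    rfl
  rw [hker, Submodule.span_le, Set.image_subset_iff]
  rfl

end

end FlagUniqueness

open FlagUniqueness in
/-- uniqueness of the decomposition.  If a vector of `mᵏ` admits two
decompositions `Σⱼ b₁⋯bⱼ·Vⱼ = Σⱼ c₁⋯cⱼ·Wⱼ` with all `bⱼ, cⱼ ∈ m` nonzero and
`(V₁,…,V_h)`, `(W₁,…,W_s)` linearly independent families in `Kᵏ`, then `h = s` and the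
associated flags coincide: `span{V₁,…,Vᵢ} = span{W₁,…,Wᵢ}` for every `i`. -/
theorem stmt18 (K : Type*) [Field K] (A : Type*) [CommRing A] [IsDomain A]
    [ValuationRing A] [Algebra K A]
    (hres : Function.Bijective
      ((IsLocalRing.residue A).comp (algebraMap K A) : K →+* IsLocalRing.ResidueField A))
    (k h s : ℕ) (V : Fin h → Fin k → K) (W : Fin s → Fin k → K)
    (hV : LinearIndependent K V) (hW : LinearIndependent K W)
    (b : Fin h → A) (c : Fin s → A)
    (hb : ∀ j, b j ∈ IsLocalRing.maximalIdeal A) (hb0 : ∀ j, b j ≠ 0)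
    (hc : ∀ j, c j ∈ IsLocalRing.maximalIdeal A) (hc0 : ∀ j, c j ≠ 0)
    (heq : ∀ i : Fin k,
      ∑ j : Fin h, (∏ l ∈ Finset.Iic j, b l) * algebraMap K A (V j i) =
        ∑ j : Fin s, (∏ l ∈ Finset.Iic j, c l) * algebraMap K A (W j i)) :
    h = s ∧ ∀ i : ℕ, i < h →
      Submodule.span K (V '' {j : Fin h | (j : ℕ) ≤ i}) =
        Submodule.span K (W '' {j : Fin s | (j : ℕ) ≤ i}) := by
  -- The common vector.
  let x : Fin k → A := fun i => ∑ j, prefixProd b j * algebraMap K A (V j i)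
  have hxV : ∀ i, x i = ∑ j, prefixProd b j * algebraMap K A (V j i) := fun _ => rfl
  have hxW : ∀ i, x i = ∑ j, prefixProd c j * algebraMap K A (W j i) := heq
  have hrange := (range_span_prefixProd hb hb0 hV hxV).trans
    (range_span_prefixProd hc hc0 hW hxW).symm
  have hsb := strictAnti_span hb hb0
  have hsc := strictAnti_span hc hc0
  have hhs : h = s := by
    have hcard := congrArg Set.ncard hrange
    rw [← Set.image_univ, ← Set.image_univ, Set.ncard_image_of_injective _ hsb.injective,
      Set.ncard_image_of_injective _ hsc.injective] at hcard
    simpa [Set.ncard_univ] using hcard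
  subst hhs
  have hfun : (fun j => Ideal.span {prefixProd b j}) = fun j => Ideal.span {prefixProd c j} := by
    have hd := (StrictMono.range_inj (f := fun j => OrderDual.toDual (Ideal.span {prefixProd b j}))
      (g := fun j => OrderDual.toDual (Ideal.span {prefixProd c j}))
      hsb.dual_right hsc.dual_right).1 hrange
    exact hd
  refine ⟨rfl, fun i hi => ?_⟩
  rw [← Subspace.dualAnnihilator_inj]
  ext φ
  rw [mem_dualAnnihilator_span_iff φ ⟨i, hi⟩, mem_dualAnnihilator_span_iff φ ⟨i, hi⟩,
    forall_apply_eq_zero_iff hb hb0 hxV, forall_apply_eq_zero_iff hc hc0 hxW]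
  exact iff_of_eq (congrArg _ (congrFun hfun ⟨i, hi⟩))
end
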